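/- arXiv:math/0610384 — 6 statements merged into one kernel-verified Lean document; each statement's English description precedes it below -/
import Mathlib

section
/- Let k ≥ 1 and s ≥ 1 be integers and let T be a finite tree in which every non-leaf vertex has degree exactly s; assume v(T) = 2 if s = 1, and that T has at least one non-leaf vertex if s ≥ 2. Let T_k be the graph obtained from T by subdividing every non-dangling edge with exactly k new vertices and every dangling edge with exactly k−1 new vertices. Then λ_k(T_k) = τ_k(T_k) = (v(T_k) − k)/(sk − k + 1). -/
/-- `H` is a path with `k` edges (a "k-edge path"), as a subgraph of `G`. -/
def SimpleGraph.Subgraph.IsKEdgePath {V : Type*} {G : SimpleGraph V}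
    (H : G.Subgraph) (k : ℕ) : Prop :=
  ∃ (u v : V) (w : G.Walk u v), w.IsPath ∧ w.length = k ∧ H = w.toSubgraph

/-- `H` is a tree with `k` edges (a "k-edge tree"), as a subgraph of `G`. -/
def SimpleGraph.Subgraph.IsKEdgeTree {V : Type*} {G : SimpleGraph V}
    (H : G.Subgraph) (k : ℕ) : Prop :=
  H.coe.IsTree ∧ H.edgeSet.ncard = k

/-- The maximum number of pairwise vertex-disjoint `k`-edge paths in `G`. -/
noncomputable def SimpleGraph.lambdaK {V : Type*} (G : SimpleGraph V) (k : ℕ) : ℕ :=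
  sSup {n | ∃ P : Finset G.Subgraph,
    (∀ H ∈ P, H.IsKEdgePath k) ∧
    (P : Set G.Subgraph).Pairwise (fun H H' => Disjoint H.verts H'.verts) ∧
    P.card = n}

/-- The maximum number of pairwise vertex-disjoint `k`-edge trees in `G`. -/
noncomputable def SimpleGraph.tauK {V : Type*} (G : SimpleGraph V) (k : ℕ) : ℕ :=
  sSup {n | ∃ P : Finset G.Subgraph,
    (∀ H ∈ P, H.IsKEdgeTree k) ∧
    (P : Set G.Subgraph).Pairwise (fun H H' => Disjoint H.verts H'.verts) ∧
    P.card = n}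

/-- `G'` is obtained from `G` by subdividing each edge `e` of `G` with exactly `f e`
new vertices; `ι` is the embedding of the original (branch) vertices into `G'`.
Each edge `uv` of `G` is replaced by a path `P h` of length `f s(u,v) + 1` from `ι u`
to `ι v`, whose internal vertices are new, these paths are internally disjoint,
they cover all vertices of `G'`, and their edges are exactly the edges of `G'`. -/
def SimpleGraph.IsSubdivision {V V' : Type*} (G : SimpleGraph V) (G' : SimpleGraph V')
    (ι : V → V') (f : Sym2 V → ℕ) : Prop :=
  Function.Injective ι ∧
  ∃ P : ∀ ⦃u v : V⦄, G.Adj u v → G'.Walk (ι u) (ι v),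
    (∀ ⦃u v⦄ (h : G.Adj u v), (P h).IsPath) ∧
    (∀ ⦃u v⦄ (h : G.Adj u v), (P h).length = f s(u, v) + 1) ∧
    (∀ ⦃u v⦄ (h : G.Adj u v), P h.symm = (P h).reverse) ∧
    (∀ ⦃u v⦄ (h : G.Adj u v), ∀ z ∈ (P h).support, z ∈ Set.range ι → z = ι u ∨ z = ι v) ∧
    (∀ x : V', x ∈ Set.range ι ∨ ∃ (u v : V) (h : G.Adj u v), x ∈ (P h).support) ∧
    (∀ ⦃u v u' v' : V⦄ (h : G.Adj u v) (h' : G.Adj u' v'), s(u, v) ≠ s(u', v') →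
      ∀ z : V', z ∈ (P h).support → z ∈ (P h').support → z ∈ Set.range ι) ∧
    (∀ e : Sym2 V', e ∈ G'.edgeSet ↔ ∃ (u v : V) (h : G.Adj u v), e ∈ (P h).edges)

/-!
Call the non-leaves of `T` hubs (for a single edge, call one endpoint a hub). Deleting the hubs from
the subdivision leaves exactly `k` vertices of each subdivided edge, and these remnants are the
components that are left, so a `k`-edge tree, having `k + 1` vertices, must contain a hub.
Conversely, root `T` at a leaf and walk `k` steps from each hub towards its parent: each of these
paths meets a single hub, and they are disjoint. Hence both packing numbers equal the number of
hubs, which is expressed through `v(T_k)` by counting edges and degrees in `T`.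
-/

namespace TreePacking

open SimpleGraph Finset

section Graph

variable {V : Type*} {G : SimpleGraph V}

lemma mem_of_preconnected_of_adj_closed (hG : G.Preconnected) {S : Set V} {u : V} (hu : u ∈ S)
    (hS : ∀ a b, G.Adj a b → a ∈ S → b ∈ S) (v : V) : v ∈ S := by
  obtain ⟨w⟩ := hG u v
  by_contra hv
  obtain ⟨d, -, hfst, hsnd⟩ := w.exists_boundary_dart S hu hv
  exact hsnd (hS _ _ d.adj hfst)

lemma edge_eq_of_existsUnique_adj {v : V} (hv : ∃! w, G.Adj v w) {e e' : Sym2 V}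
    (he : e ∈ G.edgeSet) (he' : e' ∈ G.edgeSet) (hve : v ∈ e) (hve' : v ∈ e') : e = e' := by
  obtain ⟨w, rfl⟩ := hve
  obtain ⟨w', rfl⟩ := hve'
  exact congrArg (fun x ↦ s(v, x)) (hv.unique he he')

lemma eq_or_eq_of_adj_of_existsUnique_adj (hG : G.Preconnected) {u v : V} (huv : G.Adj u v)
    (hu : ∃! w, G.Adj u w) (hv : ∃! w, G.Adj v w) (x : V) : x = u ∨ x = v := by
  refine mem_of_preconnected_of_adj_closed hG (S := {u, v}) (Or.inl rfl) ?_ x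
  rintro a b hab (rfl | rfl)
  · exact Or.inr (hu.unique hab huv)
  · exact Or.inl (hv.unique hab huv.symm)

lemma exists_adj_dist_eq_dist_add_one (hG : G.Connected) {l v : V} (hv : v ≠ l) :
    ∃ p, G.Adj v p ∧ G.dist v l = G.dist p l + 1 := by
  obtain ⟨w, hw⟩ := hG.exists_walk_length_eq_dist v l
  cases w with
  | nil => exact absurd rfl hv
  | @cons _ p _ hadj q =>
    refine ⟨p, hadj, ?_⟩
    have hle := G.dist_le q
    have htri := hG.dist_triangle (u := v) (v := p) (w := l)
    rw [dist_eq_one_iff_adj.2 hadj] at htri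
    rw [Walk.length_cons] at hw
    omega

lemma exists_parent_injOn_edge (hG : G.Connected) (l : V) :
    ∃ parent : V → V, (∀ v, v ≠ l → G.Adj v (parent v)) ∧
      Set.InjOn (fun v ↦ s(v, parent v)) {l}ᶜ := by
  have hstep (v : V) : ∃ p, v ≠ l → G.Adj v p ∧ G.dist v l = G.dist p l + 1 := by
    by_cases hv : v = l
    · exact ⟨v, fun h ↦ absurd hv h⟩
    · exact (exists_adj_dist_eq_dist_add_one hG hv).imp fun _ h _ ↦ h
  choose parent hparent using hstep
  refine ⟨parent, fun v hv ↦ (hparent v hv).1, fun v hv w hw hvw ↦ ?_⟩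
  rcases Sym2.eq_iff.1 hvw with ⟨h, -⟩ | ⟨hvw, hwv⟩
  · exact h
  · have hdv := (hparent v hv).2
    have hdw := (hparent w hw).2
    rw [hwv] at hdv
    rw [← hvw] at hdw
    omega

lemma sum_card_toFinset_inter [DecidableEq V] [Fintype G.edgeSet] [G.LocallyFinite]
    (S : Finset V) : ∑ e ∈ G.edgeFinset, #(e.toFinset ∩ S) = ∑ v ∈ S, G.degree v := by
  calc ∑ e ∈ G.edgeFinset, #(e.toFinset ∩ S)
      = ∑ e ∈ G.edgeFinset, #{v ∈ S | v ∈ e} :=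
        sum_congr rfl fun e _ ↦ congrArg card (by ext v; simp [and_comm])
    _ = ∑ v ∈ S, #{e ∈ G.edgeFinset | v ∈ e} :=
        (sum_card_bipartiteAbove_eq_sum_card_bipartiteBelow (fun v e ↦ v ∈ e)).symm
    _ = ∑ v ∈ S, G.degree v := by
        simp only [← incidenceFinset_eq_filter, card_incidenceFinset_eq_degree]

lemma card_toFinset_mk_sdiff [DecidableEq V] {u v : V} (huv : u ≠ v) (R : Finset V) :
    #(s(u, v).toFinset \ R) = (if u ∈ R then 0 else 1) + (if v ∈ R then 0 else 1) := by
  rw [Sym2.toFinset_mk_eq, ← filter_notMem_eq_sdiff, filter_insert, filter_singleton]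
  split_ifs <;> simp [huv]

lemma end_notMem_support_take {u v : V} {w : G.Walk u v} (hw : w.IsPath) {k : ℕ}
    (hk : k < w.length) : v ∉ (w.take k).support := by
  intro hv
  obtain ⟨n, hn, -⟩ := Walk.mem_support_iff_exists_getVert.1 hv
  rw [Walk.take_getVert] at hn
  have hlast : min k n = w.length := hw.getVert_injOn (by simp; omega) (by simp) (by simp [hn])
  omega

lemma ncard_setOf_mem_support {u v : V} {w : G.Walk u v} (hw : w.IsPath) :
    {x | x ∈ w.support}.ncard = w.length + 1 := by
  classical
  rw [← List.coe_toFinset, Set.ncard_coe_finset, List.toFinset_card_of_nodup hw.support_nodup,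
    Walk.length_support]

end Graph

section Packing

variable {V : Type*} {G : SimpleGraph V} {k : ℕ}

lemma ncard_edgeSet_coe (H : G.Subgraph) : H.coe.edgeSet.ncard = H.edgeSet.ncard := by
  rw [← H.image_coe_edgeSet_coe,
    Set.ncard_image_of_injective _ (Sym2.map.injective Subtype.val_injective)]

lemma isKEdgeTree_iff [Finite V] {H : G.Subgraph} :
    H.IsKEdgeTree k ↔ H.Connected ∧ H.edgeSet.ncard = k ∧ H.verts.ncard = k + 1 := by
  rw [Subgraph.IsKEdgeTree, isTree_iff_connected_and_card, Nat.card_coe_set_eq,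
    Nat.card_coe_set_eq, ncard_edgeSet_coe, Subgraph.connected_iff']
  grind

lemma isKEdgeTree_of_isKEdgePath [Finite V] {H : G.Subgraph} (hH : H.IsKEdgePath k) :
    H.IsKEdgeTree k := by
  classical
  obtain ⟨u, v, w, hw, rfl, rfl⟩ := hH
  refine isKEdgeTree_iff.2 ⟨w.toSubgraph_connected, ?_, ?_⟩
  · have hedges : w.toSubgraph.edgeSet = (w.edges.toFinset : Set (Sym2 V)) := by ext; simp
    rw [hedges, Set.ncard_coe_finset, List.toFinset_card_of_nodup hw.isTrail.edges_nodup,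
      Walk.length_edges]
  · rw [Walk.verts_toSubgraph, ncard_setOf_mem_support hw]

/-- The maximum number of pairwise vertex-disjoint subgraphs of `G` with the property `p`, the
common form of `λ_k` and `τ_k`. It is the junk value `0` when these numbers are unbounded. -/
noncomputable def packingNumber (G : SimpleGraph V) (p : G.Subgraph → Prop) : ℕ :=
  sSup {n | ∃ P : Finset G.Subgraph, (∀ H ∈ P, p H) ∧
    (P : Set G.Subgraph).Pairwise (fun H H' ↦ Disjoint H.verts H'.verts) ∧ P.card = n}

lemma lambdaK_eq_packingNumber : G.lambdaK k = packingNumber G (·.IsKEdgePath k) := rfl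

lemma tauK_eq_packingNumber : G.tauK k = packingNumber G (·.IsKEdgeTree k) := rfl

lemma card_le_of_forall_exists_mem {α : Type*} [Fintype α] {hub : α → V} {P : Finset G.Subgraph}
    (hP : (P : Set G.Subgraph).Pairwise (fun H H' ↦ Disjoint H.verts H'.verts))
    (hhub : ∀ H ∈ P, ∃ a, hub a ∈ H.verts) : #P ≤ Fintype.card α := by
  choose g hg using hhub
  rw [← Fintype.card_coe P]
  refine Fintype.card_le_of_injective (fun H : P ↦ g H H.2) fun H H' heq ↦ ?_
  by_contra hne
  have hdisj : Disjoint H.1.verts H'.1.verts := hP H.2 H'.2 fun h ↦ hne (Subtype.ext h)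
  have hmem := hg H H.2
  rw [show g H H.2 = g H' H'.2 from heq] at hmem
  exact Set.disjoint_left.1 hdisj hmem (hg H' H'.2)

lemma packingNumber_eq_card {α : Type*} [Fintype α] {p : G.Subgraph → Prop} (hub : α → V)
    (hhub : ∀ H, p H → ∃ a, hub a ∈ H.verts) (W : α → G.Subgraph) (hW : ∀ a, p (W a))
    (hmem : ∀ a, hub a ∈ (W a).verts)
    (hdisj : Pairwise fun a b ↦ Disjoint (W a).verts (W b).verts) :
    packingNumber G p = Fintype.card α := by
  classical
  have hinj : Function.Injective W := by
    intro a b hab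
    by_contra hne
    exact Set.disjoint_left.1 (hdisj hne) (hmem a) (hab ▸ hmem a)
  refine IsGreatest.csSup_eq ⟨⟨univ.image W, ?_, ?_, card_image_of_injective _ hinj⟩, ?_⟩
  · simpa using hW
  · rw [coe_image, coe_univ, Set.image_univ]
    rintro _ ⟨a, rfl⟩ _ ⟨b, rfl⟩ hne
    exact hdisj fun hab ↦ hne (congrArg W hab)
  · rintro n ⟨P, hp, hP, rfl⟩
    exact card_le_of_forall_exists_mem hP fun H hH ↦ hhub H (hp H hH)

end Packing

/-- The data witnessing `G.IsSubdivision G' ι f`, bundled so that the paths replacing the edges of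
`G` can be referred to by name. -/
structure SubdivisionPaths {V V' : Type*} (G : SimpleGraph V) (G' : SimpleGraph V')
    (ι : V → V') (f : Sym2 V → ℕ) where
  injective : Function.Injective ι
  path : ∀ ⦃u v : V⦄, G.Adj u v → G'.Walk (ι u) (ι v)
  isPath : ∀ ⦃u v⦄ (h : G.Adj u v), (path h).IsPath
  length_path : ∀ ⦃u v⦄ (h : G.Adj u v), (path h).length = f s(u, v) + 1
  path_symm : ∀ ⦃u v⦄ (h : G.Adj u v), path h.symm = (path h).reverse
  eq_or_eq_of_mem_range : ∀ ⦃u v⦄ (h : G.Adj u v), ∀ z ∈ (path h).support,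
    z ∈ Set.range ι → z = ι u ∨ z = ι v
  mem_range_or_mem_support : ∀ x : V',
    x ∈ Set.range ι ∨ ∃ (u v : V) (h : G.Adj u v), x ∈ (path h).support
  mem_range_of_mem_support : ∀ ⦃u v u' v' : V⦄ (h : G.Adj u v) (h' : G.Adj u' v'),
    s(u, v) ≠ s(u', v') → ∀ z : V', z ∈ (path h).support → z ∈ (path h').support → z ∈ Set.range ι
  mem_edgeSet_iff : ∀ e : Sym2 V',
    e ∈ G'.edgeSet ↔ ∃ (u v : V) (h : G.Adj u v), e ∈ (path h).edges

lemma nonempty_subdivisionPaths {V V' : Type*} {G : SimpleGraph V} {G' : SimpleGraph V'}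
    {ι : V → V'} {f : Sym2 V → ℕ} (h : G.IsSubdivision G' ι f) :
    Nonempty (SubdivisionPaths G G' ι f) :=
  let ⟨hι, P, hP, hlen, hsymm, hrange, hcover, hdisj, hedge⟩ := h
  ⟨⟨hι, P, hP, hlen, hsymm, hrange, hcover, hdisj, hedge⟩⟩

/-- `R` consists of all vertices of `G` except some leaves, and once `R` is deleted from a
subdivision of `G` by `f`, exactly `k` vertices remain of each subdivided edge. -/
structure IsHubSet {V : Type*} [DecidableEq V] (G : SimpleGraph V) (f : Sym2 V → ℕ) (k : ℕ)
    (R : Finset V) : Prop where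
  existsUnique_adj : ∀ v ∉ R, ∃! w, G.Adj v w
  add_card_sdiff : ∀ e ∈ G.edgeSet, f e + #(e.toFinset \ R) = k

namespace SubdivisionPaths

variable {V V' : Type*} {G : SimpleGraph V} {G' : SimpleGraph V'} {ι : V → V'} {f : Sym2 V → ℕ}
  (P : SubdivisionPaths G G' ι f) {e e' : Sym2 V} {u v : V} {x : V'}

/-- The vertex set of the path replacing the edge `e`, endpoints included; empty if `e` is not an
edge of `G`. -/
def segment (e : Sym2 V) : Set V' :=
  {x | ∃ (u v : V) (h : G.Adj u v), s(u, v) = e ∧ x ∈ (P.path h).support}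

lemma segment_mk (h : G.Adj u v) : P.segment s(u, v) = {x | x ∈ (P.path h).support} := by
  ext x
  refine ⟨?_, fun hx ↦ ⟨u, v, h, rfl, hx⟩⟩
  rintro ⟨a, b, hab, heq, hx⟩
  rcases Sym2.eq_iff.1 heq with ⟨rfl, rfl⟩ | ⟨rfl, rfl⟩
  · exact hx
  · rwa [P.path_symm h, Walk.support_reverse, List.mem_reverse] at hx

lemma ncard_segment (he : e ∈ G.edgeSet) : (P.segment e).ncard = f e + 2 := by
  induction e with | _ u v
  rw [P.segment_mk he, ncard_setOf_mem_support (P.isPath he), P.length_path he]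

lemma finite_segment (he : e ∈ G.edgeSet) : (P.segment e).Finite :=
  Set.finite_of_ncard_pos (by rw [P.ncard_segment he]; omega)

lemma apply_mem_segment_iff (he : e ∈ G.edgeSet) : ι v ∈ P.segment e ↔ v ∈ e := by
  induction e with | _ a b
  rw [P.segment_mk he, Sym2.mem_iff, Set.mem_ofPred_eq]
  constructor
  · intro hv
    exact (P.eq_or_eq_of_mem_range he _ hv ⟨v, rfl⟩).imp (fun h ↦ P.injective h)
      (fun h ↦ P.injective h)
  · rintro (rfl | rfl)
    · exact Walk.start_mem_support _
    · exact Walk.end_mem_support _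

lemma exists_eq_apply_of_mem_segment (he : e ∈ G.edgeSet) (he' : e' ∈ G.edgeSet) (hne : e ≠ e')
    (hx : x ∈ P.segment e) (hx' : x ∈ P.segment e') : ∃ v, x = ι v ∧ v ∈ e ∧ v ∈ e' := by
  obtain ⟨u₁, v₁, h₁, rfl, hx₁⟩ := id hx
  obtain ⟨u₂, v₂, h₂, rfl, hx₂⟩ := id hx'
  obtain ⟨v, rfl⟩ := P.mem_range_of_mem_support h₁ h₂ hne x hx₁ hx₂
  exact ⟨v, rfl, (P.apply_mem_segment_iff he).1 hx, (P.apply_mem_segment_iff he').1 hx'⟩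

lemma exists_mem_segment_of_adj {a b : V'} (hab : G'.Adj a b) :
    ∃ e ∈ G.edgeSet, a ∈ P.segment e ∧ b ∈ P.segment e := by
  obtain ⟨u, v, h, hmem⟩ := (P.mem_edgeSet_iff s(a, b)).1 hab
  exact ⟨s(u, v), h, ⟨u, v, h, rfl, Walk.fst_mem_support_of_mem_edges _ hmem⟩,
    ⟨u, v, h, rfl, Walk.snd_mem_support_of_mem_edges _ hmem⟩⟩

lemma mem_range_or_exists_mem_segment (x : V') :
    x ∈ Set.range ι ∨ ∃ e ∈ G.edgeSet, x ∈ P.segment e :=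
  (P.mem_range_or_mem_support x).imp_right fun ⟨u, v, h, hx⟩ ↦ ⟨s(u, v), h, u, v, h, rfl, hx⟩

lemma ncard_segment_diff_image [DecidableEq V] (he : e ∈ G.edgeSet) (R : Finset V) :
    (P.segment e \ ι '' R).ncard = f e + #(e.toFinset \ R) := by
  have hdiff : P.segment e \ ι '' R = P.segment e \ ι '' (e.toFinset ∩ R : Finset V) := by
    ext x
    refine and_congr_right fun hx ↦ not_congr ⟨?_, ?_⟩
    · rintro ⟨v, hv, rfl⟩
      exact ⟨v, by simpa using ⟨(P.apply_mem_segment_iff he).1 hx, hv⟩, rfl⟩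
    · rintro ⟨v, hv, rfl⟩
      exact ⟨v, (mem_inter.1 hv).2, rfl⟩
  have hsub : ι '' (e.toFinset ∩ R : Finset V) ⊆ P.segment e := by
    rintro _ ⟨v, hv, rfl⟩
    exact (P.apply_mem_segment_iff he).2 (Sym2.mem_toFinset.1 (mem_inter.1 hv).1)
  have hpart := card_sdiff_add_card_inter e.toFinset R
  rw [Sym2.card_toFinset_of_not_isDiag e (G.not_isDiag_of_mem_edgeSet he)] at hpart
  rw [hdiff, Set.ncard_sdiff hsub ((finite_toSet _).image ι), P.ncard_segment he,
    Set.ncard_image_of_injective _ P.injective, Set.ncard_coe_finset]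
  omega

section HubSet

variable [DecidableEq V] {k : ℕ} {R : Finset V}

lemma exists_mem_segment_of_notMem_image (hR : IsHubSet G f k R) (hx : x ∉ ι '' R) :
    ∃ e ∈ G.edgeSet, x ∈ P.segment e := by
  rcases P.mem_range_or_exists_mem_segment x with ⟨v, rfl⟩ | hmem
  · obtain ⟨w, hvw, -⟩ := hR.existsUnique_adj v fun hv ↦ hx ⟨v, hv, rfl⟩
    exact ⟨s(v, w), hvw, (P.apply_mem_segment_iff hvw).2 (Sym2.mem_mk_left v w)⟩
  · exact hmem

lemma mem_segment_of_adj (hR : IsHubSet G f k R) (he : e ∈ G.edgeSet) {a b : V'}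
    (hab : G'.Adj a b) (ha : a ∈ P.segment e) (haR : a ∉ ι '' R) : b ∈ P.segment e := by
  obtain ⟨e', he', ha', hb'⟩ := P.exists_mem_segment_of_adj hab
  suffices e = e' from this ▸ hb'
  by_contra hne
  obtain ⟨v, rfl, hve, hve'⟩ := P.exists_eq_apply_of_mem_segment he he' hne ha ha'
  have hv : v ∉ R := fun hv ↦ haR ⟨v, hv, rfl⟩
  exact hne (edge_eq_of_existsUnique_adj (hR.existsUnique_adj v hv) he he' hve hve')

lemma exists_verts_subset_segment (hR : IsHubSet G f k R) {H : G'.Subgraph} (hH : H.Connected)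
    (hHR : Disjoint H.verts (ι '' R)) : ∃ e ∈ G.edgeSet, H.verts ⊆ P.segment e := by
  rw [Set.disjoint_left] at hHR
  obtain ⟨x, hx⟩ := hH.nonempty
  obtain ⟨e, he, hxe⟩ := P.exists_mem_segment_of_notMem_image hR (hHR hx)
  refine ⟨e, he, fun y hy ↦ ?_⟩
  exact mem_of_preconnected_of_adj_closed hH.coe.preconnected (S := {z | (z : V') ∈ P.segment e})
    (u := ⟨x, hx⟩) hxe
    (fun a _ hab ha ↦ P.mem_segment_of_adj hR he hab.adj_sub ha (hHR a.2)) ⟨y, hy⟩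

lemma ncard_verts_le_of_disjoint_hubs (P : SubdivisionPaths G G' ι f) (hR : IsHubSet G f k R)
    {H : G'.Subgraph} (hH : H.Connected) (hHR : Disjoint H.verts (ι '' R)) : H.verts.ncard ≤ k := by
  obtain ⟨e, he, hsub⟩ := P.exists_verts_subset_segment hR hH hHR
  calc H.verts.ncard ≤ (P.segment e \ ι '' R).ncard :=
        Set.ncard_le_ncard (Set.subset_sdiff.2 ⟨hsub, hHR⟩) (P.finite_segment he).sdiff
    _ = f e + #(e.toFinset \ R) := P.ncard_segment_diff_image he R
    _ = k := hR.add_card_sdiff e he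

lemma exists_hub_mem_verts [Finite V'] (P : SubdivisionPaths G G' ι f) (hR : IsHubSet G f k R)
    {H : G'.Subgraph} (hH : H.IsKEdgeTree k) : ∃ v : R, ι v ∈ H.verts := by
  obtain ⟨hconn, -, hcard⟩ := isKEdgeTree_iff.1 hH
  by_contra! hHR
  have hdisj : Disjoint H.verts (ι '' R) :=
    Set.disjoint_right.2 (by rintro _ ⟨v, hv, rfl⟩; exact hHR ⟨v, hv⟩)
  have := P.ncard_verts_le_of_disjoint_hubs hR hconn hdisj
  omega

lemma exists_isKEdgePath_of_adj (hR : IsHubSet G f k R) (huv : G.Adj u v) (hu : u ∈ R) :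
    ∃ H : G'.Subgraph, H.IsKEdgePath k ∧ ι u ∈ H.verts ∧ H.verts ⊆ P.segment s(u, v) ∧
      ∀ w ∈ R, ι w ∈ H.verts → w = u := by
  have hk := hR.add_card_sdiff s(u, v) huv
  rw [card_toFinset_mk_sdiff huv.ne, if_pos hu] at hk
  have hlen := P.length_path huv
  have hsub : ((P.path huv).take k).toSubgraph.verts ⊆ P.segment s(u, v) := by
    rw [P.segment_mk huv, Walk.verts_toSubgraph]
    exact (Walk.isSubwalk_take _ k).support_subset
  refine ⟨((P.path huv).take k).toSubgraph, ⟨_, _, _, (P.isPath huv).take k, ?_, rfl⟩,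
    Walk.start_mem_verts_toSubgraph _, hsub, fun w hw hmem ↦ ?_⟩
  · rw [Walk.take_length]
    split_ifs at hk <;> omega
  · rcases Sym2.mem_iff.1 ((P.apply_mem_segment_iff huv).1 (hsub hmem)) with rfl | rfl
    · rfl
    · rw [if_pos hw] at hk
      exact absurd ((Walk.mem_verts_toSubgraph _).1 hmem)
        (end_notMem_support_take (P.isPath huv) (by omega))

lemma exists_disjoint_isKEdgePath (P : SubdivisionPaths G G' ι f) (hR : IsHubSet G f k R)
    (hG : G.Connected) (hne : ∃ l, l ∉ R) :
    ∃ W : R → G'.Subgraph, (∀ v, (W v).IsKEdgePath k) ∧ (∀ v : R, ι v ∈ (W v).verts) ∧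
      Pairwise fun v w ↦ Disjoint (W v).verts (W w).verts := by
  obtain ⟨l, hl⟩ := hne
  obtain ⟨parent, hadj, hinj⟩ := exists_parent_injOn_edge hG l
  have hroot (v : R) : (v : V) ≠ l := fun h ↦ hl (h ▸ v.2)
  choose W hpath hmem hsub hhub using
    fun v : R ↦ P.exists_isKEdgePath_of_adj hR (hadj v (hroot v)) v.2
  refine ⟨W, hpath, hmem, fun v w hvw ↦ Set.disjoint_left.2 fun x hxv hxw ↦ ?_⟩
  have hedge : s((v : V), parent v) ≠ s((w : V), parent w) :=
    fun h ↦ hvw (Subtype.ext (hinj (hroot v) (hroot w) h))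
  have hev := hadj v (hroot v)
  have hew := hadj w (hroot w)
  obtain ⟨z, rfl, hzv, hzw⟩ :=
    P.exists_eq_apply_of_mem_segment hev hew hedge (hsub v hxv) (hsub w hxw)
  by_cases hz : z ∈ R
  · exact hvw (Subtype.ext ((hhub v z hz hxv).symm.trans (hhub w z hz hxw)))
  · exact hedge (edge_eq_of_existsUnique_adj (hR.existsUnique_adj z hz) hev hew hzv hzw)

theorem lambdaK_eq_card_hubSet [Finite V'] (P : SubdivisionPaths G G' ι f)
    (hR : IsHubSet G f k R) (hG : G.Connected) (hne : ∃ l, l ∉ R) : G'.lambdaK k = #R := by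
  obtain ⟨W, hW, hmem, hdisj⟩ := P.exists_disjoint_isKEdgePath hR hG hne
  rw [lambdaK_eq_packingNumber, ← Fintype.card_coe R]
  exact packingNumber_eq_card (fun v : R ↦ ι v)
    (fun H hH ↦ P.exists_hub_mem_verts hR (isKEdgeTree_of_isKEdgePath hH)) W hW hmem hdisj

theorem tauK_eq_card_hubSet [Finite V'] (P : SubdivisionPaths G G' ι f)
    (hR : IsHubSet G f k R) (hG : G.Connected) (hne : ∃ l, l ∉ R) : G'.tauK k = #R := by
  obtain ⟨W, hW, hmem, hdisj⟩ := P.exists_disjoint_isKEdgePath hR hG hne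
  rw [tauK_eq_packingNumber, ← Fintype.card_coe R]
  exact packingNumber_eq_card (fun v : R ↦ ι v) (fun H hH ↦ P.exists_hub_mem_verts hR hH) W
    (fun v ↦ isKEdgeTree_of_isKEdgePath (hW v)) hmem hdisj

end HubSet

section Counting

variable [Fintype V] [Fintype V']

lemma card_eq_card_add_sum [Fintype G.edgeSet] (P : SubdivisionPaths G G' ι f) :
    Fintype.card V' = Fintype.card V + ∑ e ∈ G.edgeFinset, f e := by
  classical
  let interior (e : Sym2 V) : Finset V' := (P.segment e \ Set.range ι).toFinset
  have hcard : ∀ e ∈ G.edgeFinset, #(interior e) = f e := by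
    intro e he
    have := P.ncard_segment_diff_image (mem_edgeFinset.1 he) univ
    rwa [coe_univ, Set.image_univ, sdiff_eq_empty_iff_subset.2 (subset_univ _), card_empty,
      add_zero, Set.ncard_eq_toFinset_card'] at this
  have hdisj : (G.edgeFinset : Set (Sym2 V)).PairwiseDisjoint interior := by
    intro e he e' he' hne
    refine disjoint_left.2 fun x hx hx' ↦ ?_
    rw [Set.mem_toFinset] at hx hx'
    obtain ⟨v, rfl, -⟩ := P.exists_eq_apply_of_mem_segment (mem_edgeFinset.1 he)
      (mem_edgeFinset.1 he') hne hx.1 hx'.1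
    exact hx.2 ⟨v, rfl⟩
  have hcompl : (univ.image ι)ᶜ = G.edgeFinset.biUnion interior := by
    ext x
    have hx := P.mem_range_or_exists_mem_segment x
    simp only [interior, mem_compl, mem_image, mem_univ, true_and, mem_biUnion, mem_edgeFinset,
      Set.mem_toFinset, Set.mem_sdiff, Set.mem_range] at hx ⊢
    tauto
  rw [← sum_congr rfl hcard, ← card_biUnion hdisj, ← hcompl, ← card_univ (α := V),
    ← card_image_of_injective univ P.injective, card_add_card_compl]

lemma card_eq_card_hubSet_add_mul [DecidableEq V] [DecidableRel G.Adj]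
    (P : SubdivisionPaths G G' ι f) {k : ℕ} {R : Finset V} (hR : IsHubSet G f k R) :
    Fintype.card V' = #R + k * #G.edgeFinset := by
  have hleaf : ∑ e ∈ G.edgeFinset, #(e.toFinset \ R) = #Rᶜ := by
    simp only [sdiff_eq_inter_compl, sum_card_toFinset_inter]
    rw [card_eq_sum_ones]
    exact sum_congr rfl fun v hv ↦
      degree_eq_one_iff_existsUnique_adj.2 (hR.existsUnique_adj v (mem_compl.1 hv))
  have hsum : ∑ e ∈ G.edgeFinset, (f e + #(e.toFinset \ R)) = k * #G.edgeFinset := by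
    rw [sum_congr rfl fun e he ↦ hR.add_card_sdiff e (mem_edgeFinset.1 he), sum_const,
      smul_eq_mul, mul_comm]
  rw [sum_add_distrib, hleaf] at hsum
  have := P.card_eq_card_add_sum
  have := card_add_card_compl R
  omega

end Counting

end SubdivisionPaths

section Tree

lemma isHubSet_singleton {V : Type*} [DecidableEq V] {G : SimpleGraph V} {f : Sym2 V → ℕ} {k : ℕ}
    {a b : V} (hab : G.Adj a b) (huniv : ∀ x, x = a ∨ x = b) (hf : f s(a, b) + 1 = k) :
    IsHubSet G f k {a} where
  existsUnique_adj v hv := by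
    obtain rfl : v = b := (huniv v).resolve_left (by simpa using hv)
    exact ⟨a, hab.symm, fun w hw ↦ (huniv w).resolve_right hw.ne'⟩
  add_card_sdiff e he := by
    have hedge : e = s(a, b) := by
      induction e with | _ u v
      rcases huniv u with rfl | rfl <;> rcases huniv v with rfl | rfl
      · exact absurd rfl he.ne
      · rfl
      · exact Sym2.eq_swap
      · exact absurd rfl he.ne
    rw [hedge, card_toFinset_mk_sdiff hab.ne, if_pos (mem_singleton_self a),
      if_neg (by simpa using hab.ne'), zero_add, hf]

variable {V : Type*} [Fintype V] {G : SimpleGraph V} [DecidableRel G.Adj] {R : Finset V} {s : ℕ}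

lemma card_edgeFinset_add_card_of_isTree (hG : G.IsTree) (hleaf : ∀ v ∉ R, G.degree v = 1)
    (hs : ∀ v ∈ R, G.degree v = s) : #G.edgeFinset + #R = s * #R + 1 := by
  classical
  have hdegrees : s * #R + #Rᶜ = 2 * #G.edgeFinset := by
    rw [← sum_degrees_eq_twice_card_edges, ← sum_add_sum_compl R, sum_congr rfl hs,
      sum_congr rfl fun v hv ↦ hleaf v (mem_compl.1 hv), sum_const, sum_const, smul_eq_mul,
      smul_eq_mul, mul_comm, mul_one]
  have := hG.card_edgeFinset
  have := card_add_card_compl R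
  omega

variable [DecidableEq V] {f : Sym2 V → ℕ} {k : ℕ}

lemma isHubSet_degree_ne_one (hG : G.Preconnected) (hnonleaf : ∃ v, G.degree v ≠ 1) (hk : 1 ≤ k)
    (hf : ∀ u v, G.Adj u v →
      ((G.degree u = 1 ∨ G.degree v = 1) → f s(u, v) = k - 1) ∧
      (¬(G.degree u = 1 ∨ G.degree v = 1) → f s(u, v) = k)) :
    IsHubSet G f k {v | G.degree v ≠ 1} where
  existsUnique_adj v hv := degree_eq_one_iff_existsUnique_adj.1 (by simpa using hv)
  add_card_sdiff e he := by
    induction e with | _ u v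
    have hnotBoth : ¬(G.degree u = 1 ∧ G.degree v = 1) := by
      rintro ⟨hu, hv⟩
      obtain ⟨c, hc⟩ := hnonleaf
      rcases eq_or_eq_of_adj_of_existsUnique_adj hG he
        (degree_eq_one_iff_existsUnique_adj.1 hu) (degree_eq_one_iff_existsUnique_adj.1 hv) c
        with rfl | rfl
      exacts [hc hu, hc hv]
    have hdangling := (hf u v he).1
    have hinner := (hf u v he).2
    simp only [card_toFinset_mk_sdiff he.ne, mem_filter_univ]
    grind

lemma exists_isHubSet_of_isTree (hG : G.IsTree) (hs : 1 ≤ s) (hk : 1 ≤ k)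
    (hdeg : ∀ v, G.degree v ≠ 1 → G.degree v = s) (hnonleaf : 2 ≤ s → ∃ v, G.degree v ≠ 1)
    (hf : ∀ u v, G.Adj u v →
      ((G.degree u = 1 ∨ G.degree v = 1) → f s(u, v) = k - 1) ∧
      (¬(G.degree u = 1 ∨ G.degree v = 1) → f s(u, v) = k)) :
    ∃ R : Finset V, IsHubSet G f k R ∧ (∀ v ∈ R, G.degree v = s) ∧ ∃ l, l ∉ R := by
  obtain rfl | hs2 : s = 1 ∨ 2 ≤ s := by omega
  · have hone (v : V) : G.degree v = 1 := by_contra fun hv ↦ hv (hdeg v hv)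
    have hleaf (v : V) := degree_eq_one_iff_existsUnique_adj.1 (hone v)
    obtain ⟨a⟩ := hG.connected.nonempty
    obtain ⟨b, hab, -⟩ := hleaf a
    have huniv := eq_or_eq_of_adj_of_existsUnique_adj hG.connected.preconnected hab
      (hleaf a) (hleaf b)
    have hfab : f s(a, b) + 1 = k := by
      rw [(hf a b hab).1 (Or.inl (hone a)), Nat.sub_add_cancel hk]
    exact ⟨{a}, isHubSet_singleton hab huniv hfab, fun v _ ↦ hone v, b, by simpa using hab.ne'⟩
  · obtain ⟨c, hc⟩ := hnonleaf hs2
    obtain ⟨d, hcd⟩ := (G.degree_pos_iff_exists_adj c).1 (by rw [hdeg c hc]; omega)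
    have : Nontrivial V := ⟨c, d, hcd.ne⟩
    obtain ⟨l, hl⟩ := hG.exists_vert_degree_one_of_nontrivial
    exact ⟨_, isHubSet_degree_ne_one hG.connected.preconnected ⟨c, hc⟩ hk hf,
      fun v hv ↦ hdeg v (by simpa using hv), l, by simpa using hl⟩

end Tree

end TreePacking

/-- Let `k ≥ 1` and `s ≥ 1` and let `T` be a finite tree in which every non-leaf
vertex has degree exactly `s` (with `v(T) = 2` if `s = 1`, and at least one
non-leaf vertex if `s ≥ 2`).  Let `T_k` be obtained from `T` by subdividing every
non-dangling edge with exactly `k` new vertices and every dangling edge (an edge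
incident to a leaf) with exactly `k − 1` new vertices.  Then
`λ_k(T_k) = τ_k(T_k) = (v(T_k) − k)/(sk − k + 1)`. -/
theorem stmt_4 {V V' : Type} [Fintype V] [Fintype V'] (k s : ℕ) (hk : 1 ≤ k) (hs : 1 ≤ s)
    (T : SimpleGraph V) [DecidableRel T.Adj] (hT : T.IsTree)
    (hdeg : ∀ v : V, T.degree v ≠ 1 → T.degree v = s)
    (hs1 : s = 1 → Fintype.card V = 2)
    (hs2 : 2 ≤ s → ∃ v : V, T.degree v ≠ 1)
    (Tk : SimpleGraph V') (ι : V → V') (f : Sym2 V → ℕ)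
    (hf : ∀ u v : V, T.Adj u v →
      ((T.degree u = 1 ∨ T.degree v = 1) → f s(u, v) = k - 1) ∧
      (¬(T.degree u = 1 ∨ T.degree v = 1) → f s(u, v) = k))
    (hsub : T.IsSubdivision Tk ι f) :
    (Tk.lambdaK k : ℚ) = (Tk.tauK k : ℚ) ∧
    (Tk.tauK k : ℚ) = ((Fintype.card V' : ℚ) - k) / (s * k - k + 1) := by
  classical
  obtain ⟨P⟩ := TreePacking.nonempty_subdivisionPaths hsub
  obtain ⟨R, hR, hRs, hne⟩ := TreePacking.exists_isHubSet_of_isTree hT hs hk hdeg hs2 hf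
  have hleaf : ∀ v ∉ R, T.degree v = 1 := fun v hv ↦
    SimpleGraph.degree_eq_one_iff_existsUnique_adj.2 (hR.existsUnique_adj v hv)
  have hedges : (T.edgeFinset.card + R.card : ℚ) = s * R.card + 1 :=
    mod_cast TreePacking.card_edgeFinset_add_card_of_isTree hT hleaf hRs
  have hcard : (Fintype.card V' : ℚ) = R.card + k * T.edgeFinset.card :=
    mod_cast P.card_eq_card_hubSet_add_mul hR
  have hdenom : (s * k - k + 1 : ℚ) ≠ 0 := by
    have : (k : ℚ) ≤ s * k := mod_cast Nat.le_mul_of_pos_left k hs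
    linarith
  rw [P.lambdaK_eq_card_hubSet hR hT.connected hne, P.tauK_eq_card_hubSet hR hT.connected hne]
  refine ⟨rfl, (eq_div_iff hdenom).2 ?_⟩
  linear_combination -hcard - k * hedges
end

section
/- Let s ≥ 3 and k ≥ 1 be integers and let H be a finite simple graph in which every vertex has degree at least 3 and at most s. Let H_k be the graph obtained from H by subdividing every edge with exactly k new vertices. Then λ_k(H_k) = τ_k(H_k) = v(H). -/
/-!
A tree with `k` edges has `k + 1` vertices, too many to fit among the `k` inner vertices of a
single subdivided edge, and a connected subgraph can leave a subdivided edge only through a branch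
vertex. So every `k`-edge tree contains a branch vertex, which bounds the size of a packing.

For the converse, every edge has two ends and every vertex has degree at least two, so Hall's
marriage theorem assigns to each vertex of `H` an incident edge, with no edge used twice. Following
the assigned subdivided edge from each branch vertex for `k` steps stops just short of the other
branch vertex, so these paths are pairwise disjoint.
-/

section

open SimpleGraph

variable {V : Type*} {G : SimpleGraph V}

theorem end_notMem_support_take_of_isPath {u v : V} {p : G.Walk u v} (hp : p.IsPath) {n : ℕ}
    (hn : n < p.length) : v ∉ (p.take n).support := by
  rw [Walk.mem_support_iff_exists_getVert]
  rintro ⟨i, hi, -⟩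
  rw [Walk.take_getVert, hp.getVert_eq_end_iff (by lia)] at hi
  lia

theorem ncard_verts_toSubgraph_of_isPath {u v : V} {p : G.Walk u v} (hp : p.IsPath) :
    p.toSubgraph.verts.ncard = p.length + 1 := by
  classical
  rw [Walk.verts_toSubgraph, ← List.coe_toFinset, Set.ncard_coe_finset,
    List.toFinset_card_of_nodup hp.support_nodup, Walk.length_support]

theorem ncard_edgeSet_toSubgraph_of_isTrail {u v : V} {p : G.Walk u v} (hp : p.IsTrail) :
    p.toSubgraph.edgeSet.ncard = p.length := by
  classical
  rw [Walk.edgeSet_toSubgraph, ← Walk.coe_edges_toFinset, Set.ncard_coe_finset,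
    List.toFinset_card_of_nodup hp.edges_nodup, Walk.length_edges]

theorem ncard_support_sdiff_add_one_le_length {u v : V} {p : G.Walk u v} (hp : p.IsPath)
    (huv : u ≠ v) {B : Set V} (hu : u ∈ B) (hv : v ∈ B) :
    ({z | z ∈ p.support} \ B).ncard + 1 ≤ p.length := by
  have endpoints_subset : {u, v} ⊆ {z | z ∈ p.support} := by
    simp [Set.insert_subset_iff]
  have card_support := ncard_verts_toSubgraph_of_isPath hp
  rw [Walk.verts_toSubgraph] at card_support
  have card_inner := Set.ncard_sdiff_add_ncard_of_subset endpoints_subset p.support.finite_toSet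
  have diff_subset : {z | z ∈ p.support} \ B ⊆ {z | z ∈ p.support} \ {u, v} :=
    Set.sdiff_subset_sdiff_right (by simp [Set.insert_subset_iff, hu, hv])
  have card_le := Set.ncard_le_ncard diff_subset p.support.finite_toSet.sdiff
  rw [Set.ncard_pair huv] at card_inner
  lia

theorem card_edgeSet_coe (T : G.Subgraph) : Nat.card T.coe.edgeSet = T.edgeSet.ncard := by
  rw [← Subgraph.image_coe_edgeSet_coe,
    Set.ncard_image_of_injective _ (Sym2.map.injective Subtype.val_injective),
    Nat.card_coe_set_eq]

theorem isTree_coe_iff {T : G.Subgraph} (hT : T.verts.Finite) :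
    T.coe.IsTree ↔ T.coe.Connected ∧ T.edgeSet.ncard + 1 = T.verts.ncard := by
  have := hT.to_subtype
  rw [isTree_iff_connected_and_card, card_edgeSet_coe, Nat.card_coe_set_eq]

theorem isKEdgeTree_of_isKEdgePath {T : G.Subgraph} {k : ℕ} (hT : T.IsKEdgePath k) :
    T.IsKEdgeTree k := by
  obtain ⟨u, v, p, hp, rfl, rfl⟩ := hT
  have verts_finite : p.toSubgraph.verts.Finite := by
    rw [Walk.verts_toSubgraph]
    exact p.support.finite_toSet
  have card_edges := ncard_edgeSet_toSubgraph_of_isTrail hp.isTrail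
  refine ⟨(isTree_coe_iff verts_finite).2 ⟨p.toSubgraph_connected.coe, ?_⟩, card_edges⟩
  rw [card_edges, ncard_verts_toSubgraph_of_isPath hp]

theorem verts_subset_of_connected {T : G.Subgraph} (hT : T.coe.Connected) {S : Set V}
    (hS : (T.verts ∩ S).Nonempty) (hadj : ∀ a b, T.Adj a b → a ∈ S → b ∈ S) : T.verts ⊆ S := by
  obtain ⟨x, hxT, hxS⟩ := hS
  intro y hy
  by_contra hyS
  obtain ⟨w⟩ := hT.preconnected ⟨x, hxT⟩ ⟨y, hy⟩
  obtain ⟨d, -, hfst, hsnd⟩ := w.exists_boundary_dart (Subtype.val ⁻¹' S) hxS hyS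
  exact hsnd (hadj _ _ d.adj hfst)

theorem card_le_card_biUnion_incidenceFinset [DecidableEq V] [G.LocallyFinite]
    {A : Finset V} (hdeg : ∀ v ∈ A, 2 ≤ G.degree v) :
    A.card ≤ (A.biUnion fun v => G.incidenceFinset v).card := by
  have double_count := Finset.card_mul_le_card_mul (s := A)
    (t := A.biUnion fun v => G.incidenceFinset v) (fun v e => v ∈ e) (m := 2) (n := 2) ?_ ?_
  · lia
  · intro v hv
    calc 2 ≤ (G.incidenceFinset v).card := by simpa using hdeg v hv
      _ ≤ _ := Finset.card_le_card fun e he => Finset.mem_bipartiteAbove _ |>.2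
        ⟨Finset.mem_biUnion.2 ⟨v, hv, he⟩, ((G.mem_incidenceFinset v e).1 he).2⟩
  · intro e _
    induction e with | _ x y =>
    calc _ ≤ ({x, y} : Finset V).card := Finset.card_le_card fun z hz => by
          simpa using (Finset.mem_bipartiteBelow _).1 hz |>.2
      _ ≤ 2 := Finset.card_le_two

theorem exists_adj_injective_edge [G.LocallyFinite] (hdeg : ∀ v, 2 ≤ G.degree v) :
    ∃ w : V → V, (∀ v, G.Adj v (w v)) ∧ Function.Injective fun v => s(v, w v) := by
  classical
  obtain ⟨e, e_injective, e_mem⟩ :=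
    (Finset.all_card_le_biUnion_card_iff_exists_injective fun v => G.incidenceFinset v).1
      fun _ => card_le_card_biUnion_incidenceFinset fun v _ => hdeg v
  simp only [mem_incidenceFinset] at e_mem
  choose w e_eq using fun v => (e_mem v).2
  obtain rfl : e = fun v => s(v, w v) := funext e_eq
  exact ⟨w, fun v => (e_mem v).1, e_injective⟩

/-- The sizes of the finite families of pairwise vertex-disjoint subgraphs of `G` that all satisfy
`p`. The suprema of these sets for `k`-edge paths and `k`-edge trees are, by definition,
`G.lambdaK k` and `G.tauK k`. -/
def packingSizes (G : SimpleGraph V) (p : G.Subgraph → Prop) : Set ℕ :=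
  {n | ∃ P : Finset G.Subgraph, (∀ T ∈ P, p T) ∧
    (P : Set G.Subgraph).Pairwise (fun T T' => Disjoint T.verts T'.verts) ∧ P.card = n}

theorem packingSizes_mono {p q : G.Subgraph → Prop} (hpq : ∀ T, p T → q T) :
    packingSizes G p ⊆ packingSizes G q := by
  rintro n ⟨P, hP, hdisj, hcard⟩
  exact ⟨P, fun T hT => hpq T (hP T hT), hdisj, hcard⟩

theorem card_mem_packingSizes {ι : Type*} [Fintype ι] {p : G.Subgraph → Prop} {T : ι → G.Subgraph}
    (hp : ∀ i, p (T i)) (hne : ∀ i, (T i).verts.Nonempty)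
    (hdisj : Pairwise fun i j => Disjoint (T i).verts (T j).verts) :
    Fintype.card ι ∈ packingSizes G p := by
  classical
  have T_injective : Function.Injective T := by
    intro i j hij
    by_contra hne_ij
    have self_disjoint : Disjoint (T j).verts (T j).verts := by
      simpa only [hij] using hdisj hne_ij
    exact (hne j).ne_empty (disjoint_self.1 self_disjoint)
  refine ⟨Finset.univ.image T, by simpa using hp, ?_, ?_⟩
  · rw [Finset.coe_image, Finset.coe_univ, Set.image_univ]
    rintro _ ⟨i, rfl⟩ _ ⟨j, rfl⟩ hij
    exact hdisj fun h => hij (congrArg T h)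
  · rw [Finset.card_image_of_injective _ T_injective, Finset.card_univ]

theorem card_mem_upperBounds_packingSizes {ι : Type*} [Fintype ι] {p : G.Subgraph → Prop}
    {x : ι → V} (hx : ∀ T, p T → ∃ i, x i ∈ T.verts) :
    Fintype.card ι ∈ upperBounds (packingSizes G p) := by
  rintro _ ⟨P, hP, hdisj, rfl⟩
  choose i hi using fun T : P => hx T (hP T T.2)
  rw [← Fintype.card_coe]
  refine Fintype.card_le_of_injective i fun T T' hTT' => ?_
  by_contra hne
  exact Set.disjoint_left.1 (hdisj T.2 T'.2 (Subtype.coe_ne_coe.2 hne)) (hi T) (hTT' ▸ hi T')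

variable {V' : Type*} {H : SimpleGraph V} {H' : SimpleGraph V'} {ι : V → V'} {f : Sym2 V → ℕ}

theorem exists_verts_ncard_le_of_disjoint_range (hsub : H.IsSubdivision H' ι f) {T : H'.Subgraph}
    (hT : T.coe.Connected) (hι : Disjoint T.verts (Set.range ι)) :
    ∃ e ∈ H.edgeSet, T.verts.Finite ∧ T.verts.ncard ≤ f e := by
  obtain ⟨ι_injective, P, isPath, length_eq, reverse_eq, -, cover, inner_disjoint, edge_iff⟩ := hsub
  obtain ⟨⟨x, hx⟩⟩ := hT.nonempty
  obtain ⟨u, v, h, hxP⟩ := (cover x).resolve_left (Set.disjoint_left.1 hι hx)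
  have adj_closed : ∀ a b, T.Adj a b → a ∈ (P h).support → b ∈ (P h).support := by
    intro a b hab ha
    obtain ⟨u', v', h', hmem⟩ := (edge_iff s(a, b)).1 hab.adj_sub
    have ha' := Walk.fst_mem_support_of_mem_edges _ hmem
    have hb' := Walk.snd_mem_support_of_mem_edges _ hmem
    have same_edge : s(u, v) = s(u', v') := by
      by_contra hne
      exact Set.disjoint_left.1 hι hab.fst_mem (inner_disjoint h h' hne a ha ha')
    obtain ⟨rfl, rfl⟩ | ⟨rfl, rfl⟩ := Sym2.eq_iff.1 same_edge
    · exact hb'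
    · rwa [reverse_eq h, Walk.support_reverse, List.mem_reverse] at hb'
  have verts_subset : T.verts ⊆ {z | z ∈ (P h).support} \ Set.range ι :=
    Set.subset_sdiff.2 ⟨verts_subset_of_connected hT ⟨x, hx, hxP⟩ adj_closed, hι⟩
  have inner_finite : ({z | z ∈ (P h).support} \ Set.range ι).Finite :=
    (P h).support.finite_toSet.sdiff
  have inner_card := ncard_support_sdiff_add_one_le_length (isPath h) (ι_injective.ne h.ne)
    (Set.mem_range_self u) (Set.mem_range_self v)
  rw [length_eq h] at inner_card
  exact ⟨s(u, v), h, inner_finite.subset verts_subset,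
    (Set.ncard_le_ncard verts_subset inner_finite).trans (Nat.le_of_succ_le_succ inner_card)⟩

theorem exists_branch_mem_verts_of_isKEdgeTree (hsub : H.IsSubdivision H' ι f) {k : ℕ}
    (hf : ∀ e ∈ H.edgeSet, f e ≤ k) {T : H'.Subgraph} (hT : T.IsKEdgeTree k) :
    ∃ v, ι v ∈ T.verts := by
  by_contra! hno
  have disjoint_range : Disjoint T.verts (Set.range ι) := by
    rw [Set.disjoint_right]
    rintro _ ⟨v, rfl⟩
    exact hno v
  obtain ⟨isTree, card_edges⟩ := hT
  obtain ⟨e, he, verts_finite, card_verts⟩ :=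
    exists_verts_ncard_le_of_disjoint_range hsub isTree.connected disjoint_range
  have := ((isTree_coe_iff verts_finite).1 isTree).2
  have := hf e he
  lia

theorem exists_pairwise_disjoint_isKEdgePath (hsub : H.IsSubdivision H' ι f) {k : ℕ}
    (hf : ∀ e ∈ H.edgeSet, k ≤ f e) {w : V → V} (hw : ∀ v, H.Adj v (w v))
    (hinj : Function.Injective fun v => s(v, w v)) :
    ∃ T : V → H'.Subgraph, (∀ v, (T v).IsKEdgePath k) ∧ (∀ v, (T v).verts.Nonempty) ∧
      Pairwise fun v v' => Disjoint (T v).verts (T v').verts := by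
  obtain ⟨ι_injective, P, isPath, length_eq, -, branch_eq, -, inner_disjoint, -⟩ := hsub
  have lt_length (v : V) : k < (P (hw v)).length := by
    rw [length_eq]
    exact Nat.lt_succ_of_le (hf _ (hw v))
  let q (v : V) := (P (hw v)).take k
  have mem_P {v : V} {z : V'} (hz : z ∈ (q v).support) : z ∈ (P (hw v)).support := by
    rw [Walk.support_take] at hz
    exact List.mem_of_mem_take hz
  have eq_branch {v : V} {z : V'} (hz : z ∈ (q v).support) (hzι : z ∈ Set.range ι) : z = ι v := by
    refine (branch_eq (hw v) z (mem_P hz) hzι).resolve_right ?_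
    rintro rfl
    exact end_notMem_support_take_of_isPath (isPath (hw v)) (lt_length v) hz
  refine ⟨fun v => (q v).toSubgraph, fun v => ⟨_, _, q v, (isPath (hw v)).take k, ?_, rfl⟩,
    fun v => ⟨ι v, (q v).start_mem_verts_toSubgraph⟩, fun v v' hne => ?_⟩
  · rw [Walk.take_length, min_eq_left (lt_length v).le]
  · refine Set.disjoint_left.2 fun z hz hz' => ?_
    rw [Walk.mem_verts_toSubgraph] at hz hz'
    have hzι := inner_disjoint (hw v) (hw v') (hinj.ne hne) z (mem_P hz) (mem_P hz')
    exact hne (ι_injective ((eq_branch hz hzι).symm.trans (eq_branch hz' hzι)))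

theorem stmt_5_general [Fintype V] [DecidableRel H.Adj] (hdeg : ∀ v, 2 ≤ H.degree v) {k : ℕ}
    (hsub : H.IsSubdivision H' ι (fun _ => k)) :
    H'.lambdaK k = Fintype.card V ∧ H'.tauK k = Fintype.card V := by
  obtain ⟨w, hw, hinj⟩ := exists_adj_injective_edge hdeg
  obtain ⟨T, isPath, verts_nonempty, verts_disjoint⟩ :=
    exists_pairwise_disjoint_isKEdgePath hsub (fun _ _ => le_rfl) hw hinj
  have paths_subset_trees : packingSizes H' (·.IsKEdgePath k) ⊆ packingSizes H' (·.IsKEdgeTree k) :=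
    packingSizes_mono fun _ => isKEdgeTree_of_isKEdgePath
  have path_packing : Fintype.card V ∈ packingSizes H' (·.IsKEdgePath k) :=
    card_mem_packingSizes isPath verts_nonempty verts_disjoint
  have tree_bound : Fintype.card V ∈ upperBounds (packingSizes H' (·.IsKEdgeTree k)) :=
    card_mem_upperBounds_packingSizes fun _ =>
      exists_branch_mem_verts_of_isKEdgeTree hsub fun _ _ => le_rfl
  exact ⟨IsGreatest.csSup_eq ⟨path_packing, upperBounds_mono_set paths_subset_trees tree_bound⟩,
    IsGreatest.csSup_eq ⟨paths_subset_trees path_packing, tree_bound⟩⟩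

end

/-- Let `s ≥ 3` and `k ≥ 1` and let `H` be a finite simple graph in which every
vertex has degree at least 3 and at most `s`.  Let `H_k` be obtained from `H` by
subdividing every edge with exactly `k` new vertices.  Then
`λ_k(H_k) = τ_k(H_k) = v(H)`. -/
theorem stmt_5 {V V' : Type} [Fintype V] [Fintype V'] (s k : ℕ) (hs : 3 ≤ s) (hk : 1 ≤ k)
    (H : SimpleGraph V) [DecidableRel H.Adj]
    (hdeg : ∀ v : V, 3 ≤ H.degree v ∧ H.degree v ≤ s)
    (Hk : SimpleGraph V') (ι : V → V')
    (hsub : H.IsSubdivision Hk ι (fun _ => k)) :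
    Hk.lambdaK k = Hk.tauK k ∧ Hk.tauK k = Fintype.card V := by
  obtain ⟨paths, trees⟩ := stmt_5_general (fun v => Nat.le_of_succ_le (hdeg v).1) hsub
  exact ⟨paths.trans trees.symm, trees⟩
end

section
/- Let s ≥ 3 be an integer and let H be a finite simple graph in which every vertex has degree at least 3 and at most s. Let H_2 be the graph obtained from H by subdividing every edge with exactly 2 new vertices. Then λ(H_2) = v(H) ≥ v(H_2)/(s+1), and λ(H_2) = v(H_2)/(s+1) holds if and only if H is s-regular. -/
/-!
Each edge of `H` is subdivided twice, so the new vertices of `H₂` correspond to the darts of `H`: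
`d` stands for the new vertex next to its tail `d.fst`. Hence `v(H₂) = v(H) + ∑ deg`, which is at
most `(s + 1) v(H)`, with equality exactly when `H` is `s`-regular.

The edges of `H₂` between new vertices form a matching `d ↔ d.symm`, so every 2-edge path contains
a branch vertex and `λ(H₂) ≤ v(H)`. Conversely, the stars formed by a branch vertex and its
neighbours are pairwise disjoint, and each contains a 2-edge path once the degrees are at least 2.
-/

open SimpleGraph

section Walk

variable {V : Type*} {G : SimpleGraph V} {a b : V}

theorem walk_support_eq_of_length_eq_three (p : G.Walk a b) (hp : p.length = 3) :
    p.support = [a, p.snd, p.penultimate, b] := by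
  match p, hp with
  | .cons _ (.cons _ (.cons _ .nil)), _ => simp

theorem walk_edges_eq_of_length_eq_three (p : G.Walk a b) (hp : p.length = 3) :
    p.edges = [s(a, p.snd), s(p.snd, p.penultimate), s(p.penultimate, b)] := by
  match p, hp with
  | .cons _ (.cons _ (.cons _ .nil)), _ => simp

end Walk

section LambdaK

variable {V W : Type*} [Fintype V] {G : SimpleGraph W} {k : ℕ}

theorem verts_nonempty_of_isKEdgePath {K : G.Subgraph} (hK : K.IsKEdgePath k) :
    K.verts.Nonempty := by
  obtain ⟨u, v, w, -, -, rfl⟩ := hK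
  exact ⟨u, w.start_mem_verts_toSubgraph⟩

theorem lambdaK_le_card_of_forall_exists_mem_verts (ι : V → W)
    (hι : ∀ K : G.Subgraph, K.IsKEdgePath k → ∃ v, ι v ∈ K.verts) :
    G.lambdaK k ≤ Fintype.card V := by
  refine csSup_le' ?_
  rintro _ ⟨P, hP, hdisj, rfl⟩
  choose f hf using fun K : P => hι K (hP K K.2)
  have hf_inj : Function.Injective f := by
    intro K K' hKK'
    by_contra hne
    have hKK'_disj := hdisj K.2 K'.2 (Subtype.coe_injective.ne hne)
    exact Set.disjoint_left.1 hKK'_disj (hf K) (hKK' ▸ hf K')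
  simpa using Fintype.card_le_of_injective f hf_inj

theorem card_le_lambdaK_of_pairwise_disjoint_verts [Finite W] (Q : V → G.Subgraph)
    (hQ : ∀ v, (Q v).IsKEdgePath k)
    (hdisj : Pairwise fun u v => Disjoint (Q u).verts (Q v).verts) :
    Fintype.card V ≤ G.lambdaK k := by
  classical
  have hQ_inj : Function.Injective Q := by
    intro u v huv
    by_contra hne
    obtain ⟨z, hz⟩ := verts_nonempty_of_isKEdgePath (hQ u)
    exact Set.disjoint_left.1 (hdisj hne) hz (huv ▸ hz)
  refine le_csSup ⟨Nat.card G.Subgraph, ?_⟩ ⟨Finset.univ.image Q, ?_, ?_, ?_⟩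
  · rintro _ ⟨P, -, -, rfl⟩
    simpa using Nat.card_mono Set.finite_univ (Set.subset_univ (P : Set G.Subgraph))
  · simpa using hQ
  · rw [Finset.coe_image, Finset.coe_univ, Set.image_univ]
    rintro _ ⟨u, rfl⟩ _ ⟨v, rfl⟩ hne
    exact hdisj (ne_of_apply_ne Q hne)
  · rw [Finset.card_image_of_injective _ hQ_inj, Finset.card_univ]

end LambdaK

section Degree

variable {V : Type*} [Fintype V] {H : SimpleGraph V} [DecidableRel H.Adj] {s : ℕ}

theorem sum_degree_le_card_mul (hdeg : ∀ v, H.degree v ≤ s) :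
    ∑ v, H.degree v ≤ Fintype.card V * s := by
  simpa using Finset.sum_le_card_nsmul Finset.univ (H.degree ·) s fun v _ => hdeg v

theorem sum_degree_eq_card_mul_iff (hdeg : ∀ v, H.degree v ≤ s) :
    ∑ v, H.degree v = Fintype.card V * s ↔ H.IsRegularOfDegree s := by
  have hsum : ∑ _v : V, s = Fintype.card V * s := by simp
  rw [← hsum, Finset.sum_eq_sum_iff_of_le fun v _ => hdeg v]
  simp [IsRegularOfDegree]

end Degree

/-- The system of paths realising `G` as a subdivision of `H` with `f e` new vertices on each
edge `e`: the witness hidden in `H.IsSubdivision G ι f`, indexed by the darts of `H` so that the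
two orientations of an edge are handled uniformly. -/
structure SubdivisionPaths {V W : Type*} (H : SimpleGraph V) (G : SimpleGraph W)
    (ι : V → W) (f : Sym2 V → ℕ) where
  branch_injective : Function.Injective ι
  path (d : H.Dart) : G.Walk (ι d.fst) (ι d.snd)
  isPath (d : H.Dart) : (path d).IsPath
  length_path (d : H.Dart) : (path d).length = f d.edge + 1
  path_symm (d : H.Dart) : path d.symm = (path d).reverse
  eq_or_eq_of_branch_mem_support {d : H.Dart} {v : V} :
    ι v ∈ (path d).support → ι v = ι d.fst ∨ ι v = ι d.snd
  mem_range_or_exists_mem_support (z : W) : z ∈ Set.range ι ∨ ∃ d, z ∈ (path d).support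
  mem_range_of_edge_ne {d d' : H.Dart} {z : W} : d.edge ≠ d'.edge →
    z ∈ (path d).support → z ∈ (path d').support → z ∈ Set.range ι
  exists_mem_edges_of_adj {x y : W} : G.Adj x y → ∃ d, s(x, y) ∈ (path d).edges

namespace SubdivisionPaths

variable {V W : Type*} {H : SimpleGraph V} {G : SimpleGraph W} {ι : V → W}

theorem nonempty_of_isSubdivision {f : Sym2 V → ℕ} (hsub : H.IsSubdivision G ι f) :
    Nonempty (SubdivisionPaths H G ι f) := by
  obtain ⟨hι, P, hpath, hlen, hsymm, hbranch, hcover, hdisj, hedge⟩ := hsub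
  exact ⟨{
    branch_injective := hι
    path := fun d => P d.adj
    isPath := fun d => hpath d.adj
    length_path := fun d => hlen d.adj
    path_symm := fun d => hsymm d.adj
    eq_or_eq_of_branch_mem_support := fun hv => hbranch _ _ hv ⟨_, rfl⟩
    mem_range_or_exists_mem_support := fun z =>
      (hcover z).imp_right fun ⟨u, v, h, hz⟩ => ⟨⟨(u, v), h⟩, hz⟩
    mem_range_of_edge_ne := fun hne => hdisj _ _ hne _
    exists_mem_edges_of_adj := fun hxy =>
      let ⟨u, v, h, he⟩ := (hedge _).1 hxy
      ⟨⟨(u, v), h⟩, he⟩ }⟩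

theorem getVert_path_ne_branch {f : Sym2 V → ℕ} (S : SubdivisionPaths H G ι f) (d : H.Dart)
    {i : ℕ} (hi₀ : 0 < i) (hi : i < (S.path d).length) (v : V) :
    (S.path d).getVert i ≠ ι v := by
  intro hiv
  have hinj := (S.isPath d).getVert_injOn
  rcases S.eq_or_eq_of_branch_mem_support (hiv ▸ (S.path d).getVert_mem_support i) with hv | hv
  · have : i = 0 := hinj hi.le (Nat.zero_le _) (by rw [hiv, hv, Walk.getVert_zero])
    lia
  · have : i = (S.path d).length := hinj hi.le (by simp) (by rw [hiv, hv, Walk.getVert_length])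
    lia

variable (S : SubdivisionPaths H G ι fun _ => 2)

/-- The new vertex adjacent to the tail of the dart `d` when each edge is subdivided twice. The
other new vertex on the same edge is `S.inner d.symm`. -/
def inner (d : H.Dart) : W :=
  (S.path d).snd

theorem penultimate_path (d : H.Dart) : (S.path d).penultimate = S.inner d.symm := by
  rw [inner, S.path_symm]
  exact (Walk.snd_reverse _).symm

theorem support_path (d : H.Dart) :
    (S.path d).support = [ι d.fst, S.inner d, S.inner d.symm, ι d.snd] := by
  rw [← penultimate_path]
  exact walk_support_eq_of_length_eq_three _ (S.length_path d)

theorem edges_path (d : H.Dart) :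
    (S.path d).edges =
      [s(ι d.fst, S.inner d), s(S.inner d, S.inner d.symm), s(S.inner d.symm, ι d.snd)] := by
  rw [← penultimate_path]
  exact walk_edges_eq_of_length_eq_three _ (S.length_path d)

theorem inner_ne_branch (d : H.Dart) (v : V) : S.inner d ≠ ι v :=
  S.getVert_path_ne_branch d one_pos (by rw [S.length_path]; lia) v

theorem inner_ne_inner_symm (d : H.Dart) : S.inner d ≠ S.inner d.symm := by
  have hnodup := (S.isPath d).support_nodup
  rw [support_path] at hnodup
  grind

theorem inner_injective : Function.Injective S.inner := by
  intro d d' hdd'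
  have hedge : d.edge = d'.edge := by
    by_contra hne
    have hd : S.inner d ∈ (S.path d).support := by simp [support_path]
    have hd' : S.inner d ∈ (S.path d').support := by simp [support_path, hdd']
    obtain ⟨v, hv⟩ := S.mem_range_of_edge_ne hne hd hd'
    exact S.inner_ne_branch d v hv.symm
  rcases (dart_edge_eq_iff d d').1 hedge with rfl | rfl
  · rfl
  · exact absurd hdd'.symm (S.inner_ne_inner_symm d')

theorem mem_range_branch_or_mem_range_inner (z : W) :
    z ∈ Set.range ι ∨ z ∈ Set.range S.inner := by
  rcases S.mem_range_or_exists_mem_support z with hz | ⟨d, hz⟩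
  · exact .inl hz
  · rw [support_path] at hz
    grind

theorem bijective_sumElim_branch_inner : Function.Bijective (Sum.elim ι S.inner) := by
  constructor
  · exact S.branch_injective.sumElim S.inner_injective fun v d => (S.inner_ne_branch d v).symm
  · rw [← Set.range_eq_univ, Set.Sum.elim_range]
    exact Set.eq_univ_of_forall S.mem_range_branch_or_mem_range_inner

theorem card_eq_card_add_sum_degree [Fintype V] [Fintype W] [DecidableRel H.Adj]
    (S : SubdivisionPaths H G ι fun _ => 2) :
    Fintype.card W = Fintype.card V + ∑ v, H.degree v := by
  classical
  rw [← H.dart_card_eq_sum_degrees, ← Fintype.card_sum]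
  exact (Fintype.card_of_bijective S.bijective_sumElim_branch_inner).symm

theorem adj_branch_inner (d : H.Dart) : G.Adj (ι d.fst) (S.inner d) :=
  (S.path d).adj_snd (by simp [Walk.not_nil_iff_lt_length, S.length_path])

theorem eq_symm_of_adj_inner {d d' : H.Dart} (hadj : G.Adj (S.inner d) (S.inner d')) :
    d' = d.symm := by
  obtain ⟨e, he⟩ := S.exists_mem_edges_of_adj hadj
  have hmatch : S.inner d = S.inner e ∧ S.inner d' = S.inner e.symm ∨
      S.inner d = S.inner e.symm ∧ S.inner d' = S.inner e := by
    simpa [edges_path, S.inner_ne_branch] using he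
  rcases hmatch with ⟨hd, hd'⟩ | ⟨hd, hd'⟩
  · rw [S.inner_injective hd, S.inner_injective hd']
  · rw [S.inner_injective hd, S.inner_injective hd', Dart.symm_symm]

theorem exists_branch_mem_verts_of_isKEdgePath_two (S : SubdivisionPaths H G ι fun _ => 2)
    {K : G.Subgraph} (hK : K.IsKEdgePath 2) :
    ∃ v, ι v ∈ K.verts := by
  obtain ⟨a, b, w, hw, hlen, rfl⟩ := hK
  match w, hlen, hw with
  | .cons (v := m) ham (.cons hmb .nil), _, hw =>
    by_contra! hbranch
    have hinner : ∀ z ∈ [a, m, b], ∃ d, S.inner d = z := by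
      intro z hz
      refine (S.mem_range_branch_or_mem_range_inner z).resolve_left ?_
      rintro ⟨v, rfl⟩
      exact hbranch v ((Walk.mem_verts_toSubgraph _).2 (by simpa using hz))
    obtain ⟨da, rfl⟩ := hinner a (by simp)
    obtain ⟨dm, rfl⟩ := hinner m (by simp)
    obtain ⟨db, rfl⟩ := hinner b (by simp)
    have hab : da = db := by
      rw [S.eq_symm_of_adj_inner ham.symm, S.eq_symm_of_adj_inner hmb]
    simp [Walk.isPath_def, hab] at hw

/-- The branch vertex `ι v` together with the new vertices next to it: the part of `G` in which an
optimal packing places the 2-edge path belonging to `v`. -/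
def star (v : V) : Set W :=
  insert (ι v) (S.inner '' {d | d.fst = v})

theorem pairwise_disjoint_star : Pairwise fun u v => Disjoint (S.star u) (S.star v) := by
  intro u v huv
  rw [Set.disjoint_left]
  rintro _ (rfl | ⟨d, rfl, rfl⟩) (hz | ⟨d', rfl, hz⟩)
  · exact huv (S.branch_injective hz)
  · exact S.inner_ne_branch d' u hz
  · exact S.inner_ne_branch d v hz
  · exact huv (congrArg (·.fst) (S.inner_injective hz).symm)

theorem exists_isKEdgePath_two_verts_subset_star {v : V} [Fintype (H.neighborSet v)]
    (hv : 2 ≤ H.degree v) :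
    ∃ Q : G.Subgraph, Q.IsKEdgePath 2 ∧ Q.verts ⊆ S.star v := by
  obtain ⟨a, ha, b, hb, hab⟩ := Finset.one_lt_card.1 hv
  rw [mem_neighborFinset] at ha hb
  let da : H.Dart := ⟨(v, a), ha⟩
  let db : H.Dart := ⟨(v, b), hb⟩
  have hne : S.inner da ≠ S.inner db :=
    S.inner_injective.ne fun h => hab (congrArg (·.snd) h)
  let w : G.Walk (S.inner da) (S.inner db) :=
    .cons (S.adj_branch_inner da).symm (.cons (S.adj_branch_inner db) .nil)
  refine ⟨w.toSubgraph, ⟨_, _, w, ?_, rfl, rfl⟩, ?_⟩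
  · simp [w, Walk.isPath_def, hne, S.inner_ne_branch, (S.inner_ne_branch _ _).symm]
  · intro z hz
    have hz_mem : z = S.inner da ∨ z = ι v ∨ z = S.inner db := by
      simpa [w, da] using (Walk.mem_verts_toSubgraph w).1 hz
    rcases hz_mem with rfl | rfl | rfl
    · exact .inr ⟨da, rfl, rfl⟩
    · exact .inl rfl
    · exact .inr ⟨db, rfl, rfl⟩

theorem lambdaK_two_eq_card [Fintype V] [Finite W] [DecidableRel H.Adj]
    (S : SubdivisionPaths H G ι fun _ => 2) (hdeg : ∀ v, 2 ≤ H.degree v) :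
    G.lambdaK 2 = Fintype.card V := by
  refine le_antisymm ?_ ?_
  · exact lambdaK_le_card_of_forall_exists_mem_verts ι fun _ =>
      S.exists_branch_mem_verts_of_isKEdgePath_two
  · choose Q hQ hQ_star using fun v => S.exists_isKEdgePath_two_verts_subset_star (hdeg v)
    exact card_le_lambdaK_of_pairwise_disjoint_verts Q hQ fun u v huv =>
      (S.pairwise_disjoint_star huv).mono (hQ_star u) (hQ_star v)

end SubdivisionPaths

theorem stmt_6_general {V V' : Type*} [Fintype V] [Fintype V'] (s : ℕ)
    (H : SimpleGraph V) [DecidableRel H.Adj]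
    (hdeg : ∀ v : V, 2 ≤ H.degree v ∧ H.degree v ≤ s)
    (H2 : SimpleGraph V') (ι : V → V')
    (hsub : H.IsSubdivision H2 ι (fun _ => 2)) :
    H2.lambdaK 2 = Fintype.card V ∧
    (Fintype.card V : ℚ) ≥ (Fintype.card V' : ℚ) / (s + 1) ∧
    ((H2.lambdaK 2 : ℚ) = (Fintype.card V' : ℚ) / (s + 1) ↔ H.IsRegularOfDegree s) := by
  obtain ⟨S⟩ := SubdivisionPaths.nonempty_of_isSubdivision hsub
  have hlambda : H2.lambdaK 2 = Fintype.card V := S.lambdaK_two_eq_card fun v => (hdeg v).1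
  have hcard : Fintype.card V' = Fintype.card V + ∑ v, H.degree v := S.card_eq_card_add_sum_degree
  have hle := sum_degree_le_card_mul fun v => (hdeg v).2
  have hs : (0 : ℚ) < s + 1 := by positivity
  refine ⟨hlambda, ?_, ?_⟩
  · rw [ge_iff_le, div_le_iff₀ hs, hcard]
    norm_cast
    lia
  · rw [hlambda, eq_div_iff hs.ne', hcard, ← sum_degree_eq_card_mul_iff fun v => (hdeg v).2]
    norm_cast
    lia

/-- Let `s ≥ 3` and let `H` be a finite simple graph in which every vertex has
degree at least 3 and at most `s`.  Let `H₂` be obtained from `H` by subdividing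
every edge with exactly 2 new vertices.  Then `λ(H₂) = v(H) ≥ v(H₂)/(s+1)`, with
`λ(H₂) = v(H₂)/(s+1)` if and only if `H` is `s`-regular. -/
theorem stmt_6 {V V' : Type} [Fintype V] [Fintype V'] (s : ℕ) (hs : 3 ≤ s)
    (H : SimpleGraph V) [DecidableRel H.Adj]
    (hdeg : ∀ v : V, 3 ≤ H.degree v ∧ H.degree v ≤ s)
    (H2 : SimpleGraph V') (ι : V → V')
    (hsub : H.IsSubdivision H2 ι (fun _ => 2)) :
    H2.lambdaK 2 = Fintype.card V ∧
    (Fintype.card V : ℚ) ≥ (Fintype.card V' : ℚ) / (s + 1) ∧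
    ((H2.lambdaK 2 : ℚ) = (Fintype.card V' : ℚ) / (s + 1) ↔ H.IsRegularOfDegree s) :=
  stmt_6_general s H (fun v => ⟨Nat.le_of_succ_le (hdeg v).1, (hdeg v).2⟩) H2 ι hsub
end

section
/- Let s ≥ 4 be an integer, let G be a finite simple graph, let T be a thread of G with end-vertices x and y (possibly x = y), and suppose T has at least 4 edges. Let T' = T − {x,y} and G' = G − V(T'). If λ(G') ≥ v(G')/(s+1), then λ(G) ≥ v(G)/(s+1). -/
/-- A path-thread of `G`: a maximal path in `G` such that every vertex having degree
two in the path also has degree two in `G`. -/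
def SimpleGraph.IsPathThread {V : Type*} (G : SimpleGraph V) {x y : V}
    (w : G.Walk x y) : Prop :=
  w.IsPath ∧
  (∀ v : V, (w.toSubgraph.neighborSet v).ncard = 2 → (G.neighborSet v).ncard = 2) ∧
  ∀ (x' y' : V) (w' : G.Walk x' y'), w'.IsPath →
    (∀ v : V, (w'.toSubgraph.neighborSet v).ncard = 2 → (G.neighborSet v).ncard = 2) →
    w.toSubgraph ≤ w'.toSubgraph → w.toSubgraph = w'.toSubgraph

/-- A thread of `G` with end-vertices `x` and `y` (possibly `x = y`): either a
path-thread, or (when `y = x`) a cycle-thread, i.e. a cycle all of whose vertices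
except the distinguished vertex `x` have degree two in `G`. -/
def SimpleGraph.IsThread {V : Type*} (G : SimpleGraph V) {x y : V}
    (w : G.Walk x y) : Prop :=
  G.IsPathThread w ∨
  ∃ h : y = x, (w.copy rfl h).IsCycle ∧
    ∀ v ∈ w.support, v ≠ x → (G.neighborSet v).ncard = 2

/-!
A path on `n ≥ k + 1` vertices can be cut into `⌊n / (k + 1)⌋ ≥ n / (2k + 1)` disjoint `k`-edge
paths, since `n = (k + 1) m + r` with `m ≥ 1` and `r ≤ k` gives `n ≤ (2k + 1) m`. Deleting such a
path from a graph therefore loses at most `2k + 1 ≤ s + 1` vertices for every `k`-edge path gained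
back. The interior of a thread with at least four edges is such a path for `k = 2`.
-/

open SimpleGraph Function

/-- A packing of `k`-edge paths: a family of pairwise vertex-disjoint `k`-edge paths of `G`. An
indexed family, rather than the `Finset` in `SimpleGraph.lambdaK`, makes unions of packings `Sum`
types, so that cardinalities add up automatically. -/
structure IsPathPacking {V ι : Type*} (G : SimpleGraph V) (k : ℕ) (H : ι → G.Subgraph) : Prop where
  isKEdgePath : ∀ i, (H i).IsKEdgePath k
  disjoint_verts : Pairwise (Disjoint on fun i ↦ (H i).verts)

section Packing

variable {V W ι κ : Type*} {G : SimpleGraph V} {G' : SimpleGraph W} {k : ℕ}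

theorem verts_nonempty_of_isKEdgePath_s7 {H : G.Subgraph} (hH : H.IsKEdgePath k) :
    H.verts.Nonempty := by
  obtain ⟨u, v, w, -, -, rfl⟩ := hH
  exact ⟨u, w.start_mem_verts_toSubgraph⟩

theorem isKEdgePath_map {H : G.Subgraph} (hH : H.IsKEdgePath k) {f : G →g G'}
    (hf : Injective f) : (H.map f).IsKEdgePath k := by
  obtain ⟨u, v, w, hw, hlen, rfl⟩ := hH
  exact ⟨f u, f v, w.map f, hw.map hf, by rw [Walk.length_map, hlen], (w.toSubgraph_map f).symm⟩

namespace IsPathPacking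

theorem injective {H : ι → G.Subgraph} (hH : IsPathPacking G k H) : Injective H := by
  intro i j hij
  by_contra hne
  have hself : Disjoint (H i).verts (H i).verts := by
    simpa only [onFun, ← hij] using hH.disjoint_verts hne
  exact (verts_nonempty_of_isKEdgePath_s7 (hH.isKEdgePath i)).ne_empty (disjoint_self.1 hself)

theorem map {H : ι → G.Subgraph} (hH : IsPathPacking G k H) {f : G →g G'} (hf : Injective f) :
    IsPathPacking G' k fun i ↦ (H i).map f where
  isKEdgePath i := isKEdgePath_map (hH.isKEdgePath i) hf
  disjoint_verts _ _ hij := (Set.disjoint_image_iff hf).2 (hH.disjoint_verts hij)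

theorem sumElim {H : ι → G.Subgraph} {K : κ → G.Subgraph} (hH : IsPathPacking G k H)
    (hK : IsPathPacking G k K) (hHK : ∀ i j, Disjoint (H i).verts (K j).verts) :
    IsPathPacking G k (Sum.elim H K) where
  isKEdgePath := Sum.forall.2 ⟨hH.isKEdgePath, hK.isKEdgePath⟩
  disjoint_verts := by
    rintro (i | i) (j | j) hij
    · exact hH.disjoint_verts fun h ↦ hij (congrArg Sum.inl h)
    · exact hHK i j
    · exact (hHK j i).symm
    · exact hK.disjoint_verts fun h ↦ hij (congrArg Sum.inr h)

end IsPathPacking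

variable [Finite V]

theorem isGreatest_lambdaK (G : SimpleGraph V) (k : ℕ) :
    IsGreatest {n | ∃ P : Finset G.Subgraph, (∀ H ∈ P, H.IsKEdgePath k) ∧
      (P : Set G.Subgraph).Pairwise (fun H H' ↦ Disjoint H.verts H'.verts) ∧ P.card = n}
      (G.lambdaK k) := by
  have := Fintype.ofFinite G.Subgraph
  refine ⟨Nat.sSup_mem ⟨0, ∅, by simp⟩ ?bddAbove, fun _ hn ↦ le_csSup ?bddAbove hn⟩
  refine ⟨Fintype.card G.Subgraph, ?_⟩
  rintro _ ⟨P, -, -, rfl⟩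
  exact P.card_le_univ

theorem IsPathPacking.card_le_lambdaK [Finite ι] {H : ι → G.Subgraph}
    (hH : IsPathPacking G k H) : Nat.card ι ≤ G.lambdaK k := by
  have := Fintype.ofFinite ι
  refine (isGreatest_lambdaK G k).2 ⟨Finset.univ.map ⟨H, hH.injective⟩, ?_, ?_, by simp⟩
  · simpa using hH.isKEdgePath
  · rw [Finset.coe_map, Finset.coe_univ, Set.image_univ]
    rintro _ ⟨i, rfl⟩ _ ⟨j, rfl⟩ hij
    exact hH.disjoint_verts fun h ↦ hij (congrArg H h)

theorem exists_isPathPacking_fin_lambdaK (G : SimpleGraph V) (k : ℕ) :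
    ∃ H : Fin (G.lambdaK k) → G.Subgraph, IsPathPacking G k H := by
  obtain ⟨P, hpath, hdisj, hcard⟩ := (isGreatest_lambdaK G k).1
  let e : Fin (G.lambdaK k) ≃ P := (P.equivFinOfCardEq hcard).symm
  refine ⟨fun i ↦ e i, fun i ↦ hpath _ (e i).2, fun i j hij ↦ ?_⟩
  exact hdisj (e i).2 (e j).2 fun h ↦ hij (e.injective (Subtype.ext h))

theorem lambdaK_induce_add_lambdaK_induce_le (G : SimpleGraph V) (k : ℕ) {S T : Set V}
    (hST : Disjoint S T) :
    (G.induce S).lambdaK k + (G.induce T).lambdaK k ≤ G.lambdaK k := by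
  obtain ⟨H, hH⟩ := exists_isPathPacking_fin_lambdaK (G.induce S) k
  obtain ⟨K, hK⟩ := exists_isPathPacking_fin_lambdaK (G.induce T) k
  have verts_map_subset (A : Set V) (L : (G.induce A).Subgraph) :
      (L.map (Embedding.induce A).toHom).verts ⊆ A := by
    rintro _ ⟨a, -, rfl⟩
    exact a.2
  have hHK := (hH.map (f := (Embedding.induce S).toHom) Subtype.val_injective).sumElim
    (hK.map (f := (Embedding.induce T).toHom) Subtype.val_injective)
    fun i j ↦ hST.mono (verts_map_subset S _) (verts_map_subset T _)
  simpa using hHK.card_le_lambdaK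

end Packing

section CuttingPaths

variable {V : Type*} {G : SimpleGraph V} {u v : V} {p : G.Walk u v}

theorem ncard_support_of_isPath (hp : p.IsPath) : {a | a ∈ p.support}.ncard = p.length + 1 := by
  classical
  rw [← p.length_support, ← List.toFinset_card_of_nodup hp.support_nodup, ← List.coe_toFinset,
    Set.ncard_coe_finset]

theorem isKEdgePath_take_drop (hp : p.IsPath) {m k : ℕ} (hmk : m + k ≤ p.length) :
    ((p.drop m).take k).toSubgraph.IsKEdgePath k :=
  ⟨_, _, _, (hp.drop m).take k, by rw [Walk.take_length, Walk.drop_length]; lia, rfl⟩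

theorem exists_getVert_eq_of_mem_verts_take_drop {m k : ℕ} {a : V}
    (ha : a ∈ ((p.drop m).take k).toSubgraph.verts) : ∃ r ≤ k, p.getVert (m + r) = a := by
  rw [Walk.mem_verts_toSubgraph, Walk.mem_support_iff_exists_getVert] at ha
  obtain ⟨r, rfl, hr⟩ := ha
  have hrk : r ≤ k := hr.trans (by rw [Walk.take_length]; exact min_le_left _ _)
  exact ⟨r, hrk, by rw [Walk.take_getVert, Walk.drop_getVert, min_eq_right hrk]⟩

theorem isPathPacking_take_drop (hp : p.IsPath) (k : ℕ) :
    IsPathPacking G k fun i : Fin ((p.length + 1) / (k + 1)) ↦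
      ((p.drop ((k + 1) * i)).take k).toSubgraph := by
  have block_le (i : Fin ((p.length + 1) / (k + 1))) : (k + 1) * i + k ≤ p.length := by
    have := Nat.mul_le_mul_left (k + 1) (Nat.succ_le_of_lt i.2)
    have := Nat.mul_div_le (p.length + 1) (k + 1)
    lia
  refine ⟨fun i ↦ isKEdgePath_take_drop hp (block_le i), fun i j hij ↦ ?_⟩
  refine Set.disjoint_left.2 fun a hi hj ↦ hij (Fin.ext ?_)
  obtain ⟨q, hq, rfl⟩ := exists_getVert_eq_of_mem_verts_take_drop hi
  obtain ⟨r, hr, heq⟩ := exists_getVert_eq_of_mem_verts_take_drop hj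
  have hindex : (k + 1) * (j : ℕ) + r = (k + 1) * i + q :=
    hp.getVert_injOn ((Nat.add_le_add_left hr _).trans (block_le j))
      ((Nat.add_le_add_left hq _).trans (block_le i)) heq
  have hdiv := congrArg (· / (k + 1)) hindex
  simpa [Nat.mul_add_div, Nat.div_eq_of_lt (Nat.lt_succ_of_le hq),
    Nat.div_eq_of_lt (Nat.lt_succ_of_le hr)] using hdiv.symm

theorem length_add_one_div_le_lambdaK [Finite V] (hp : p.IsPath) (k : ℕ) :
    (p.length + 1) / (k + 1) ≤ G.lambdaK k := by
  simpa using (isPathPacking_take_drop hp k).card_le_lambdaK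

theorem length_add_one_div_le_lambdaK_induce_support [Finite V] (hp : p.IsPath) (k : ℕ) :
    (p.length + 1) / (k + 1) ≤ (G.induce {a | a ∈ p.support}).lambdaK k := by
  let q := p.induce {a | a ∈ p.support} fun _ ↦ id
  have hmap : q.map (Embedding.induce _).toHom = p := p.map_induce _
  have hlen : q.length = p.length := (q.length_map _).symm.trans (congrArg Walk.length hmap)
  have hq : q.IsPath := .of_map (hmap.symm ▸ hp)
  exact hlen ▸ length_add_one_div_le_lambdaK hq k

end CuttingPaths

section Interior

variable {V : Type*} {G : SimpleGraph V} {x y : V} {w : G.Walk x y}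

theorem cons_support_tail_dropLast_concat (hlen : 2 ≤ w.length) :
    x :: (w.tail.dropLast.support ++ [y]) = w.support := by
  have hw : ¬w.Nil := by rw [← Walk.length_eq_zero_iff]; lia
  have htail : ¬w.tail.Nil := by rw [← Walk.length_eq_zero_iff, Walk.length_tail]; lia
  rw [Walk.support_dropLast_concat htail, Walk.cons_support_tail hw]

theorem nodup_support_tail_dropLast_concat_of_isThread (hw : G.IsThread w)
    (hlen : 2 ≤ w.length) : (w.tail.dropLast.support ++ [y]).Nodup := by
  have htail : w.support.tail.Nodup := by
    obtain ⟨hpath, -, -⟩ | ⟨rfl, hcycle, -⟩ := hw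
    · exact hpath.support_nodup.tail
    · exact hcycle.support_nodup
  rwa [← cons_support_tail_dropLast_concat hlen] at htail

theorem isPath_tail_dropLast_of_isThread (hw : G.IsThread w) (hlen : 2 ≤ w.length) :
    w.tail.dropLast.IsPath :=
  .mk' (nodup_support_tail_dropLast_concat_of_isThread hw hlen).of_append_left

theorem end_notMem_support_tail_dropLast_of_isThread (hw : G.IsThread w) (hlen : 2 ≤ w.length) :
    y ∉ w.tail.dropLast.support := by
  simpa using List.disjoint_of_nodup_append
    (nodup_support_tail_dropLast_concat_of_isThread hw hlen)

theorem start_notMem_support_tail_dropLast_of_isThread (hw : G.IsThread w)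
    (hlen : 2 ≤ w.length) : x ∉ w.tail.dropLast.support := by
  have hy := end_notMem_support_tail_dropLast_of_isThread hw hlen
  obtain ⟨hpath, -, -⟩ | ⟨rfl, -, -⟩ := hw
  · have hnodup := cons_support_tail_dropLast_concat hlen ▸ hpath.support_nodup
    exact fun hx ↦ (List.nodup_cons.1 hnodup).1 (List.mem_append_left _ hx)
  · exact hy

theorem setOf_mem_support_tail_dropLast_of_isThread (hw : G.IsThread w) (hlen : 2 ≤ w.length) :
    {a | a ∈ w.tail.dropLast.support} = {a | a ∈ w.support ∧ a ≠ x ∧ a ≠ y} := by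
  have hx := start_notMem_support_tail_dropLast_of_isThread hw hlen
  have hy := end_notMem_support_tail_dropLast_of_isThread hw hlen
  rw [← cons_support_tail_dropLast_concat hlen]
  grind

end Interior

theorem le_div_mul_two_mul_add_one {k n : ℕ} (hkn : k + 1 ≤ n) :
    n ≤ n / (k + 1) * (2 * k + 1) := by
  have hquot : 1 ≤ n / (k + 1) := Nat.div_pos hkn k.succ_pos
  calc n = (k + 1) * (n / (k + 1)) + n % (k + 1) := (Nat.div_add_mod n (k + 1)).symm
    _ ≤ (k + 1) * (n / (k + 1)) + k * (n / (k + 1)) := by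
      grw [Nat.le_of_lt_succ (Nat.mod_lt n k.succ_pos)]
      exact Nat.add_le_add_left (Nat.le_mul_of_pos_right k hquot) _
    _ = n / (k + 1) * (2 * k + 1) := by ring

theorem stmt_7_general {V : Type*} [Finite V] {k s : ℕ} (hs : 2 * k ≤ s) {G : SimpleGraph V}
    {u v : V} {p : G.Walk u v} (hp : p.IsPath) (hlen : k ≤ p.length)
    (hG' : ({a | a ∈ p.support}ᶜ.ncard : ℚ) / (s + 1) ≤
      (G.induce {a | a ∈ p.support}ᶜ).lambdaK k) :
    (Nat.card V : ℚ) / (s + 1) ≤ G.lambdaK k := by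
  set S := {a | a ∈ p.support}
  have hpos : (0 : ℚ) < s + 1 := by positivity
  rw [div_le_iff₀ hpos] at hG' ⊢
  norm_cast at hG' ⊢
  have hS : S.ncard ≤ (G.induce S).lambdaK k * (s + 1) := by
    rw [ncard_support_of_isPath hp]
    grw [← length_add_one_div_le_lambdaK_induce_support hp k, ← hs]
    exact le_div_mul_two_mul_add_one (Nat.succ_le_succ hlen)
  calc Nat.card V = S.ncard + Sᶜ.ncard := S.ncard_add_ncard_compl.symm
    _ ≤ ((G.induce S).lambdaK k + (G.induce Sᶜ).lambdaK k) * (s + 1) := by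
      rw [add_mul]; exact add_le_add hS hG'
    _ ≤ G.lambdaK k * (s + 1) := by
      grw [lambdaK_induce_add_lambdaK_induce_le G k disjoint_compl_right]

/-- Let `s ≥ 4`, let `G` be a finite simple graph, let `T` be a thread of `G` with
end-vertices `x` and `y` (possibly `x = y`) having at least 4 edges, let
`T' = T − {x,y}` and `G' = G − V(T')`.  If `λ(G') ≥ v(G')/(s+1)`, then
`λ(G) ≥ v(G)/(s+1)`. -/
theorem stmt_7 {V : Type} [Fintype V] (s : ℕ) (hs : 4 ≤ s)
    (G : SimpleGraph V) {x y : V} (w : G.Walk x y)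
    (hw : G.IsThread w) (hlen : 4 ≤ w.length)
    (S : Set V) (hS : S = {v : V | v ∈ w.support ∧ v ≠ x ∧ v ≠ y})
    (hG' : ((G.induce Sᶜ).lambdaK 2 : ℚ) ≥ (Sᶜ.ncard : ℚ) / (s + 1)) :
    (G.lambdaK 2 : ℚ) ≥ (Fintype.card V : ℚ) / (s + 1) := by
  have htwo : 2 ≤ w.length := by lia
  rw [hS, ← setOf_mem_support_tail_dropLast_of_isThread hw htwo] at hG'
  simpa using stmt_7_general (k := 2) (by lia) (isPath_tail_dropLast_of_isThread hw htwo)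
    (by rw [Walk.length_dropLast, Walk.length_tail]; lia) hG'
end

section
/- Let G be a finite simple graph, let T be a path-thread of G with distinct end-vertices x and y, let T' = T − {x,y}, and suppose v(T') = 3k + 2 for some integer k ≥ 1. Let G' be the graph obtained from G − V(T') by adding one new vertex z together with the two new edges xz and yz. If λ(G') ≥ v(G')/4, then λ(G) ≥ v(G)/4. -/
/-!
Collapsing the interior `S` of the path to one point gives a map `V → Option ↥Sᶜ`, and preimages
of disjoint sets under it are disjoint. So a packing of `G'` can be lifted to `G` by choosing a
2-edge path inside the preimage of each member. Only the member through the new vertex `z` has to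
use vertices of `S`: one vertex next to an end if it ends in `z`, and the first two if `z` is its
midpoint. In each case `3k` consecutive vertices of `S` remain, which carry `k` further 2-edge
paths. Hence `λ(G) ≥ λ(G') + k`, while `v(G) = v(G') + 3k + 1 ≤ v(G') + 4k`.
-/

open Function

section PathVertexSets

variable {V : Type*} {G : SimpleGraph V} {m : ℕ} {s : Set V}

/-- `s` is the vertex set of a path with `m` edges in `G`. Packings of `m`-edge paths are handled
through these sets, since disjointness only concerns the vertices. -/
def IsPathVertexSet (G : SimpleGraph V) (m : ℕ) (s : Set V) : Prop :=
  ∃ H : G.Subgraph, H.IsKEdgePath m ∧ H.verts = s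

theorem IsPathVertexSet.nonempty (hs : IsPathVertexSet G m s) : s.Nonempty := by
  obtain ⟨_, ⟨u, _, w, -, -, rfl⟩, rfl⟩ := hs
  exact ⟨u, w.start_mem_verts_toSubgraph⟩

theorem verts_toSubgraph_cons_cons_nil {a b c : V} (hab : G.Adj a b) (hbc : G.Adj b c) :
    (SimpleGraph.Walk.cons hab (.cons hbc .nil)).toSubgraph.verts = {a, b, c} := by
  ext v
  simp only [SimpleGraph.Walk.mem_verts_toSubgraph, SimpleGraph.Walk.support_cons,
    SimpleGraph.Walk.support_nil, List.mem_cons, List.not_mem_nil, or_false,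
    Set.mem_insert_iff, Set.mem_singleton_iff]

theorem isPathVertexSet_two_iff :
    IsPathVertexSet G 2 s ↔ ∃ a b c, G.Adj a b ∧ G.Adj b c ∧ a ≠ c ∧ s = {a, b, c} := by
  constructor
  · rintro ⟨_, ⟨a, c, w, hw, hlen, rfl⟩, rfl⟩
    match w, hw, hlen with
    | .cons (v := b) hab (.cons hbc .nil), hw, _ =>
      refine ⟨a, b, c, hab, hbc, ?_, ?_⟩
      · rintro rfl
        simp at hw
      · exact verts_toSubgraph_cons_cons_nil hab hbc
  · rintro ⟨a, b, c, hab, hbc, hac, rfl⟩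
    refine ⟨_, ⟨a, c, .cons hab (.cons hbc .nil), ?_, rfl, rfl⟩,
      verts_toSubgraph_cons_cons_nil hab hbc⟩
    simp [SimpleGraph.Walk.cons_isPath_iff, hab.ne, hbc.ne, hac]

theorem IsPathVertexSet.exists_eq_of_mem (hs : IsPathVertexSet G 2 s) {v : V} (hv : v ∈ s) :
    (∃ a c, G.Adj v a ∧ G.Adj v c ∧ a ≠ c ∧ s = {a, v, c}) ∨
      ∃ b c, G.Adj v b ∧ G.Adj b c ∧ v ≠ c ∧ s = {v, b, c} := by
  obtain ⟨a, b, c, hab, hbc, hac, rfl⟩ := isPathVertexSet_two_iff.1 hs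
  rcases hv with rfl | rfl | rfl
  · exact .inr ⟨b, c, hab, hbc, hac, rfl⟩
  · exact .inl ⟨a, c, hab.symm, hbc, hac, rfl⟩
  · exact .inr ⟨b, a, hbc.symm, hab.symm, hac.symm, by grind⟩

theorem isPathVertexSet_getVert_image_Icc {x y : V} {w : G.Walk x y} (hw : w.IsPath) {i : ℕ}
    (hi : i + m ≤ w.length) : IsPathVertexSet G m (w.getVert '' Set.Icc i (i + m)) := by
  refine ⟨_, ⟨_, _, (w.drop i).take m, (hw.drop i).take m, ?_, rfl⟩, ?_⟩
  · rw [SimpleGraph.Walk.take_length, SimpleGraph.Walk.drop_length]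
    omega
  · ext v
    simp only [SimpleGraph.Walk.mem_verts_toSubgraph,
      SimpleGraph.Walk.mem_support_iff_exists_getVert, SimpleGraph.Walk.take_getVert,
      SimpleGraph.Walk.drop_getVert, SimpleGraph.Walk.take_length, SimpleGraph.Walk.drop_length]
    constructor
    · rintro ⟨j, rfl, -⟩
      exact ⟨_, by simp, rfl⟩
    · rintro ⟨j, ⟨hij, hjm⟩, rfl⟩
      exact ⟨j - i, by congr 1; omega, by omega⟩

theorem exists_pairwise_disjoint_isPathVertexSet_subset_segment {x y : V} {w : G.Walk x y}
    (hw : w.IsPath) {d k : ℕ} (hlen : d + (m + 1) * k ≤ w.length) :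
    ∃ f : Fin k → Set V, (∀ j, IsPathVertexSet G m (f j)) ∧ Pairwise (Disjoint on f) ∧
      ∀ j, f j ⊆ w.getVert '' Set.Ioc d (d + (m + 1) * k) := by
  let cut (j : ℕ) : ℕ := d + (m + 1) * j
  let block (j : Fin k) : Set ℕ := Set.Ioc (cut j) (cut (j + 1))
  have hcut : Monotone cut := fun i j hij => by
    dsimp only [cut]
    gcongr
  have hsubset (j : Fin k) : block j ⊆ Set.Ioc d (d + (m + 1) * k) :=
    Set.Ioc_subset_Ioc (Nat.le_add_right _ _) (hcut j.2)
  have hle (j : Fin k) : block j ⊆ {i | i ≤ w.length} := fun _ ht => (hsubset j ht).2.trans hlen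
  have hblock (j : Fin k) : block j = Set.Icc (cut j + 1) (cut j + 1 + m) := by
    ext
    simp only [block, cut, Set.mem_Ioc, Set.mem_Icc, mul_add]
    omega
  refine ⟨fun j => w.getVert '' block j, fun j => ?_, fun i j hij => ?_,
    fun j => Set.image_mono (hsubset j)⟩
  · simp only [hblock]
    exact isPathVertexSet_getVert_image_Icc hw (hle j (by simp [hblock]))
  · refine Set.disjoint_left.2 ?_
    rintro _ ⟨t, ht, rfl⟩
    rw [hw.getVert_injOn.mem_image_iff (hle j) (hle i ht)]
    exact Set.disjoint_left.1 (hcut.pairwise_disjoint_on_Ioc_succ (Fin.val_ne_of_ne hij)) ht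

end PathVertexSets

section Packings

variable {V : Type*} (G : SimpleGraph V) (m : ℕ)

/-- The sizes of the families of pairwise vertex-disjoint `m`-edge paths in `G`, the set whose
supremum is `G.lambdaK m`. -/
def disjointPathCounts : Set ℕ :=
  {n | ∃ P : Finset G.Subgraph, (∀ H ∈ P, H.IsKEdgePath m) ∧
    (P : Set G.Subgraph).Pairwise (fun H H' => Disjoint H.verts H'.verts) ∧ P.card = n}

variable [Finite V]

theorem bddAbove_disjointPathCounts : BddAbove (disjointPathCounts G m) := by
  have := Fintype.ofFinite G.Subgraph
  refine ⟨Fintype.card G.Subgraph, ?_⟩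
  rintro _ ⟨P, -, -, rfl⟩
  exact P.card_le_univ

theorem exists_pairwise_disjoint_isPathVertexSet :
    ∃ f : Fin (G.lambdaK m) → Set V,
      (∀ i, IsPathVertexSet G m (f i)) ∧ Pairwise (Disjoint on f) := by
  obtain ⟨P, hpath, hdisj, hcard⟩ :=
    Nat.sSup_mem (s := disjointPathCounts G m) ⟨0, ∅, by simp⟩ (bddAbove_disjointPathCounts G m)
  let e : P ≃ Fin (G.lambdaK m) := P.equivFinOfCardEq hcard
  refine ⟨fun i => (e.symm i).1.verts, fun i => ⟨_, hpath _ (e.symm i).2, rfl⟩, fun i j hij => ?_⟩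
  exact hdisj (e.symm i).2 (e.symm j).2 fun h => hij (e.symm.injective (Subtype.ext h))

variable {G m}

theorem card_le_lambdaK {ι : Type*} [Fintype ι] {f : ι → Set V}
    (hf : ∀ i, IsPathVertexSet G m (f i)) (hdisj : Pairwise (Disjoint on f)) :
    Fintype.card ι ≤ G.lambdaK m := by
  classical
  choose H hpath hverts using hf
  have hinj : Injective H := fun i j hij => by
    by_contra hne
    have hself : Disjoint (f i) (f i) := by
      simpa only [onFun, ← hverts, hij] using hdisj hne
    exact (IsPathVertexSet.nonempty ⟨H i, hpath i, hverts i⟩).ne_empty (disjoint_self.1 hself)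
  refine le_csSup (bddAbove_disjointPathCounts G m) ⟨Finset.univ.image H, ?_, ?_, ?_⟩
  · simpa using hpath
  · simp only [Finset.coe_image, Finset.coe_univ, Set.image_univ]
    rintro _ ⟨i, rfl⟩ _ ⟨j, rfl⟩ hne
    simpa only [hverts] using hdisj (ne_of_apply_ne H hne)
  · rw [Finset.card_image_of_injective _ hinj, Finset.card_univ]

theorem card_add_card_le_lambdaK {ι κ : Type*} [Fintype ι] [Fintype κ] {f : ι → Set V}
    {g : κ → Set V} (hf : ∀ i, IsPathVertexSet G m (f i)) (hg : ∀ j, IsPathVertexSet G m (g j))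
    (hfdisj : Pairwise (Disjoint on f)) (hgdisj : Pairwise (Disjoint on g))
    (hfg : ∀ i j, Disjoint (f i) (g j)) :
    Fintype.card ι + Fintype.card κ ≤ G.lambdaK m := by
  rw [← Fintype.card_sum]
  refine card_le_lambdaK (f := Sum.elim f g) (Sum.rec hf hg) ?_
  rintro (i | i) (j | j) hij
  · exact hfdisj (by simpa using hij)
  · exact hfg i j
  · exact (hfg j i).symm
  · exact hgdisj (by simpa using hij)

end Packings

section Interior

variable {V : Type*} {G : SimpleGraph V} {x y : V} {w : G.Walk x y}

/-- The vertices of the walk `w` other than its two ends: `V(T')` for the walk `T`. -/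
def walkInterior (w : G.Walk x y) : Set V :=
  {v | v ∈ w.support ∧ v ≠ x ∧ v ≠ y}

theorem walkInterior_eq_getVert_image_Ioo (hw : w.IsPath) :
    walkInterior w = w.getVert '' Set.Ioo 0 w.length := by
  ext v
  simp only [walkInterior, Set.mem_ofPred_eq, SimpleGraph.Walk.mem_support_iff_exists_getVert]
  constructor
  · rintro ⟨⟨j, rfl, hj⟩, hx, hy⟩
    refine ⟨j, ⟨Nat.pos_of_ne_zero ?_, hj.lt_of_ne ?_⟩, rfl⟩
    · rintro rfl
      exact hx w.getVert_zero
    · rintro rfl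
      exact hy w.getVert_length
  · rintro ⟨j, ⟨hj0, hj⟩, rfl⟩
    refine ⟨⟨j, rfl, hj.le⟩, ?_, ?_⟩
    · rw [Ne, hw.getVert_eq_start_iff hj.le]
      exact hj0.ne'
    · rw [Ne, hw.getVert_eq_end_iff hj.le]
      exact hj.ne

theorem ncard_walkInterior (hw : w.IsPath) : (walkInterior w).ncard = w.length - 1 := by
  have hinj : Set.InjOn w.getVert (Set.Ioo 0 w.length) :=
    hw.getVert_injOn.mono fun _ hi => hi.2.le
  rw [walkInterior_eq_getVert_image_Ioo hw, hinj.ncard_image, ← Finset.coe_Ioo,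
    Set.ncard_coe_finset, Nat.card_Ioo, Nat.sub_zero]

theorem getVert_mem_walkInterior (hw : w.IsPath) {i : ℕ} (hi : 0 < i) (hi' : i < w.length) :
    w.getVert i ∈ walkInterior w := by
  rw [walkInterior_eq_getVert_image_Ioo hw]
  exact ⟨i, ⟨hi, hi'⟩, rfl⟩

theorem getVert_image_Ioc_subset_walkInterior (hw : w.IsPath) {c d : ℕ} (hd : d < w.length) :
    w.getVert '' Set.Ioc c d ⊆ walkInterior w := by
  rintro _ ⟨i, hi, rfl⟩
  exact getVert_mem_walkInterior hw (Nat.zero_lt_of_lt hi.1) (hi.2.trans_lt hd)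

theorem getVert_notMem_image_Ioc (hw : w.IsPath) {i c d : ℕ} (hi : i ≤ w.length)
    (hd : d ≤ w.length) (hicd : i ≤ c ∨ d < i) : w.getVert i ∉ w.getVert '' Set.Ioc c d := by
  rw [hw.getVert_injOn.mem_image_iff (fun _ hj => hj.2.trans hd) hi, Set.mem_Ioc]
  omega

end Interior

section Collapse

variable {V : Type*} (G : SimpleGraph V) (S : Set V) (x y : V)

/-- `G − S` together with a new vertex `none` joined to those of `x` and `y` that lie outside
`S`. -/
def replaceByVertex : SimpleGraph (Option ↥Sᶜ) :=
  SimpleGraph.fromRel fun a b =>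
    (∃ a' b' : ↥Sᶜ, a = some a' ∧ b = some b' ∧ G.Adj a' b') ∨
    (a = none ∧ ∃ b' : ↥Sᶜ, b = some b' ∧ ((b' : V) = x ∨ (b' : V) = y))

open Classical in
/-- The map that collapses `S` to the new vertex `none` and fixes all other vertices. -/
noncomputable def collapseMap (v : V) : Option ↥Sᶜ :=
  if hv : v ∈ Sᶜ then some ⟨v, hv⟩ else none

/-- Some 2-edge path of `G` that avoids `A` is mapped into `Q` when `S` is collapsed: the condition
for a member `Q` of a packing of `replaceByVertex G S x y` to be lifted to `G`. -/
def LiftsAvoiding (A : Set V) (Q : Set (Option ↥Sᶜ)) : Prop :=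
  ∃ s, IsPathVertexSet G 2 s ∧ s ⊆ collapseMap S ⁻¹' Q ∧ Disjoint s A

variable {G S x y}

theorem replaceByVertex_adj_some_some {a b : ↥Sᶜ} :
    (replaceByVertex G S x y).Adj (some a) (some b) ↔ G.Adj a b := by
  simp only [replaceByVertex, SimpleGraph.fromRel_adj]
  grind [SimpleGraph.Adj.ne, SimpleGraph.adj_comm]

theorem replaceByVertex_adj_none_some {b : ↥Sᶜ} :
    (replaceByVertex G S x y).Adj none (some b) ↔ (b : V) = x ∨ (b : V) = y := by
  simp only [replaceByVertex, SimpleGraph.fromRel_adj]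
  grind

theorem collapseMap_of_mem {v : V} (hv : v ∈ S) : collapseMap S v = none := by
  simp [collapseMap, hv]

theorem collapseMap_coe (v : ↥Sᶜ) : collapseMap S v = some v := by
  simp [collapseMap]

theorem liftsAvoiding_of_none_notMem {A : Set V} (hA : A ⊆ S) {Q : Set (Option ↥Sᶜ)}
    (hQ : IsPathVertexSet (replaceByVertex G S x y) 2 Q) (hnone : none ∉ Q) :
    LiftsAvoiding G S A Q := by
  obtain ⟨a, b, c, hab, hbc, hac, rfl⟩ := isPathVertexSet_two_iff.1 hQ
  match a, b, c with
  | some a, some b, some c =>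
    refine ⟨{↑a, ↑b, ↑c}, isPathVertexSet_two_iff.2 ⟨a, b, c, replaceByVertex_adj_some_some.1 hab,
      replaceByVertex_adj_some_some.1 hbc, by simpa [Subtype.ext_iff] using hac, rfl⟩, ?_, ?_⟩
    · simp [Set.insert_subset_iff, collapseMap_coe]
    · simp only [Set.disjoint_insert_left, Set.disjoint_singleton_left]
      exact ⟨fun h => a.2 (hA h), fun h => b.2 (hA h), fun h => c.2 (hA h)⟩
  | none, _, _ | _, none, _ | _, _, none => simp at hnone

end Collapse

section Lifting

variable {V : Type*} {G : SimpleGraph V} {x y : V} {w : G.Walk x y} {k : ℕ}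

theorem exists_adj_mem_walkInterior_notMem_segment (hw : w.IsPath) (hlen : 3 * k + 3 ≤ w.length)
    {b : V} (hb : b = x ∨ b = y) :
    ∃ d ≤ 2, ∃ q ∈ walkInterior w, G.Adj q b ∧ q ∉ w.getVert '' Set.Ioc d (d + 3 * k) := by
  rcases hb with rfl | rfl
  · refine ⟨1, by omega, w.getVert 1, getVert_mem_walkInterior hw one_pos (by omega), ?_,
      getVert_notMem_image_Ioc hw (by omega) (by omega) (.inl le_rfl)⟩
    simpa using (w.adj_getVert_succ (i := 0) (by omega)).symm
  · refine ⟨0, by omega, w.getVert (w.length - 1),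
      getVert_mem_walkInterior hw (by omega) (by omega), ?_,
      getVert_notMem_image_Ioc hw (by omega) (by omega) (.inr (by omega))⟩
    have := w.adj_getVert_succ (i := w.length - 1) (by omega)
    rwa [Nat.sub_add_cancel (by omega), w.getVert_length] at this

theorem exists_liftsAvoiding_of_none_end (hw : w.IsPath) (hlen : 3 * k + 3 ≤ w.length)
    {b c : Option ↥(walkInterior w)ᶜ}
    (hb : (replaceByVertex G (walkInterior w) x y).Adj none b)
    (hbc : (replaceByVertex G (walkInterior w) x y).Adj b c) (hc : none ≠ c) :
    ∃ d ≤ 2,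
      LiftsAvoiding G (walkInterior w) (w.getVert '' Set.Ioc d (d + 3 * k)) {none, b, c} := by
  obtain ⟨b, rfl⟩ := Option.ne_none_iff_exists'.1 hb.ne'
  obtain ⟨c, rfl⟩ := Option.ne_none_iff_exists'.1 hc.symm
  obtain ⟨d, hd, q, hq, hqb, hqd⟩ :=
    exists_adj_mem_walkInterior_notMem_segment hw hlen (replaceByVertex_adj_none_some.1 hb)
  have hseg := getVert_image_Ioc_subset_walkInterior hw (c := d) (d := d + 3 * k) (by omega)
  refine ⟨d, hd, {q, ↑b, ↑c}, isPathVertexSet_two_iff.2 ⟨q, b, c, hqb,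
    replaceByVertex_adj_some_some.1 hbc, fun h => c.2 (h ▸ hq), rfl⟩, ?_, ?_⟩
  · simp [Set.insert_subset_iff, collapseMap_of_mem hq, collapseMap_coe]
  · simp only [Set.disjoint_insert_left, Set.disjoint_singleton_left]
    exact ⟨hqd, fun h => b.2 (hseg h), fun h => c.2 (hseg h)⟩

theorem liftsAvoiding_of_none_midpoint (hw : w.IsPath) (hlen : 3 * k + 3 ≤ w.length)
    {a c : Option ↥(walkInterior w)ᶜ}
    (ha : (replaceByVertex G (walkInterior w) x y).Adj none a)
    (hc : (replaceByVertex G (walkInterior w) x y).Adj none c) (hac : a ≠ c) :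
    LiftsAvoiding G (walkInterior w) (w.getVert '' Set.Ioc 2 (2 + 3 * k)) {a, none, c} := by
  obtain ⟨a, rfl⟩ := Option.ne_none_iff_exists'.1 ha.ne'
  obtain ⟨c, rfl⟩ := Option.ne_none_iff_exists'.1 hc.ne'
  have hx : (a : V) = x ∨ (c : V) = x := by
    rcases replaceByVertex_adj_none_some.1 ha, replaceByVertex_adj_none_some.1 hc with
      ⟨hax | hay, hcx | hcy⟩
    · exact .inl hax
    · exact .inl hax
    · exact .inr hcx
    · exact absurd (congrArg some (Subtype.ext (hay.trans hcy.symm))) hac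
  have hx_mem : collapseMap (walkInterior w) x ∈ ({some a, none, some c} : Set _) := by
    rcases hx with hx | hx <;> simp [← hx, collapseMap_coe]
  refine ⟨w.getVert '' Set.Icc 0 (0 + 2), isPathVertexSet_getVert_image_Icc hw (by omega), ?_, ?_⟩
  · rintro _ ⟨i, ⟨-, hi2⟩, rfl⟩
    obtain rfl | hi0 := Nat.eq_zero_or_pos i
    · simpa only [Set.mem_preimage, w.getVert_zero] using hx_mem
    · simp [collapseMap_of_mem (getVert_mem_walkInterior hw hi0 (by omega))]
  · rw [Set.disjoint_left]
    rintro _ ⟨i, ⟨-, hi2⟩, rfl⟩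
    exact getVert_notMem_image_Ioc hw (by omega) (by omega) (.inl hi2)

theorem exists_liftsAvoiding_of_none_mem (hw : w.IsPath) (hlen : 3 * k + 3 ≤ w.length)
    {Q : Set (Option ↥(walkInterior w)ᶜ)}
    (hQ : IsPathVertexSet (replaceByVertex G (walkInterior w) x y) 2 Q) (hnone : none ∈ Q) :
    ∃ d ≤ 2, LiftsAvoiding G (walkInterior w) (w.getVert '' Set.Ioc d (d + 3 * k)) Q := by
  rcases hQ.exists_eq_of_mem hnone with ⟨a, c, ha, hc, hac, rfl⟩ | ⟨b, c, hb, hbc, hc, rfl⟩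
  · exact ⟨2, le_rfl, liftsAvoiding_of_none_midpoint hw hlen ha hc hac⟩
  · exact exists_liftsAvoiding_of_none_end hw hlen hb hbc hc

theorem exists_forall_liftsAvoiding (hw : w.IsPath) (hlen : 3 * k + 3 ≤ w.length)
    {ι : Type*} {f : ι → Set (Option ↥(walkInterior w)ᶜ)}
    (hf : ∀ i, IsPathVertexSet (replaceByVertex G (walkInterior w) x y) 2 (f i))
    (hdisj : Pairwise (Disjoint on f)) :
    ∃ d ≤ 2, ∀ i, LiftsAvoiding G (walkInterior w) (w.getVert '' Set.Ioc d (d + 3 * k)) (f i) := by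
  have hseg {d : ℕ} (hd : d ≤ 2) : w.getVert '' Set.Ioc d (d + 3 * k) ⊆ walkInterior w :=
    getVert_image_Ioc_subset_walkInterior hw (by omega)
  by_cases hcovered : ∃ i₀, none ∈ f i₀
  · obtain ⟨i₀, hi₀⟩ := hcovered
    obtain ⟨d, hd, hlift⟩ := exists_liftsAvoiding_of_none_mem hw hlen (hf i₀) hi₀
    refine ⟨d, hd, fun i => ?_⟩
    obtain rfl | hne := eq_or_ne i i₀
    · exact hlift
    · exact liftsAvoiding_of_none_notMem (hseg hd) (hf i) (Set.disjoint_right.1 (hdisj hne) hi₀)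
  · exact ⟨0, zero_le_two, fun i => liftsAvoiding_of_none_notMem (hseg zero_le_two) (hf i)
      fun hi => hcovered ⟨i, hi⟩⟩

theorem lambdaK_replaceByVertex_add_le [Finite V] (hw : w.IsPath) (hlen : 3 * k + 3 ≤ w.length) :
    (replaceByVertex G (walkInterior w) x y).lambdaK 2 + k ≤ G.lambdaK 2 := by
  obtain ⟨f, hf, hfdisj⟩ :=
    exists_pairwise_disjoint_isPathVertexSet (replaceByVertex G (walkInterior w) x y) 2
  obtain ⟨d, hd, hlift⟩ := exists_forall_liftsAvoiding hw hlen hf hfdisj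
  choose g hg hgf hgseg using hlift
  have hgdisj : Pairwise (Disjoint on g) := fun i j hij =>
    ((hfdisj hij).preimage _).mono (hgf i) (hgf j)
  obtain ⟨h, hh, hhdisj, hhseg⟩ :=
    exists_pairwise_disjoint_isPathVertexSet_subset_segment (m := 2) (d := d) (k := k) hw (by omega)
  simpa using card_add_card_le_lambdaK hg hh hgdisj hhdisj fun i j =>
    (hgseg i).mono_right (hhseg j)

end Lifting

theorem stmt_9_general {V : Type*} [Fintype V] (G : SimpleGraph V) {x y : V} (w : G.Walk x y)
    (hw : w.IsPath) (k : ℕ) (hk : 1 ≤ k) (hcard : (walkInterior w).ncard = 3 * k + 2)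
    (hG' : ((replaceByVertex G (walkInterior w) x y).lambdaK 2 : ℚ) ≥
      (((walkInterior w)ᶜ.ncard : ℚ) + 1) / 4) :
    (G.lambdaK 2 : ℚ) ≥ (Fintype.card V : ℚ) / 4 := by
  have hlen : 3 * k + 3 ≤ w.length := by
    have := ncard_walkInterior hw
    omega
  have hlam : ((replaceByVertex G (walkInterior w) x y).lambdaK 2 : ℚ) + k ≤ G.lambdaK 2 := by
    exact_mod_cast lambdaK_replaceByVertex_add_le hw hlen
  have hV : (Fintype.card V : ℚ) = 3 * k + 2 + (walkInterior w)ᶜ.ncard := by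
    rw [← Nat.card_eq_fintype_card, ← (walkInterior w).ncard_add_ncard_compl, hcard]
    push_cast
    rfl
  have hk' : (1 : ℚ) ≤ k := by exact_mod_cast hk
  linarith

/-- Let `G` be a finite simple graph, `T` a path-thread of `G` with distinct
end-vertices `x` and `y`, `T' = T − {x,y}`, and suppose `v(T') = 3k + 2` for some
`k ≥ 1`.  Let `G'` be obtained from `G − V(T')` by adding a new vertex `z`
(modelled by `none : Option ↥Sᶜ`) together with the two new edges `xz` and `yz`.
If `λ(G') ≥ v(G')/4`, then `λ(G) ≥ v(G)/4`. -/
theorem stmt_9 {V : Type} [Fintype V]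
    (G : SimpleGraph V) {x y : V} (w : G.Walk x y)
    (hw : G.IsPathThread w) (hxy : x ≠ y)
    (S : Set V) (hS : S = {v : V | v ∈ w.support ∧ v ≠ x ∧ v ≠ y})
    (k : ℕ) (hk : 1 ≤ k) (hcard : S.ncard = 3 * k + 2)
    (G' : SimpleGraph (Option ↥Sᶜ))
    (hG'def : G' = SimpleGraph.fromRel (fun a b =>
      (∃ a' b' : ↥Sᶜ, a = some a' ∧ b = some b' ∧ G.Adj a' b') ∨
      (a = none ∧ ∃ b' : ↥Sᶜ, b = some b' ∧ ((b' : V) = x ∨ (b' : V) = y))))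
    (hG' : (G'.lambdaK 2 : ℚ) ≥ ((Sᶜ.ncard : ℚ) + 1) / 4) :
    (G.lambdaK 2 : ℚ) ≥ (Fintype.card V : ℚ) / 4 := by
  subst hS hG'def
  exact stmt_9_general G w hw.1 k hk hcard hG'
end

section
/- Let s ≥ 3 and k ≥ 1 be integers and let T be a finite tree with maximum degree at most s and with v(T) ≥ k + 1. Then T has a branch B such that v(B) ≤ (s−1)k + 1 and τ_k(B) = 1. -/
/-!
Root `T` at a vertex `r` of degree at most one, so that every vertex has at most `s - 1` children,
and choose `v` with the fewest descendants among the vertices having more than `k` of them. The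
descendants of `v` (including `v`) span a branch `B`. Every child of `v` has at most `k`
descendants, which bounds `v(B)` by `(s - 1) * k + 1`. A subtree of `B` avoiding `v` lies below a
single child of `v`, so it has at most `k` vertices; hence all `k`-edge trees of `B` meet in `v`.
-/

section

open SimpleGraph

variable {V : Type*} {G : SimpleGraph V} {r v w c x y : V} {k : ℕ}

lemma exists_adj_dist_add_one_eq (hr : G.Reachable r w) (hne : w ≠ r) :
    ∃ u, G.Adj u w ∧ G.dist r u + 1 = G.dist r w := by
  obtain ⟨p, hp⟩ := hr.symm.exists_walk_length_eq_dist
  cases p with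
  | nil => exact absurd rfl hne
  | @cons _ u _ hwu q =>
    refine ⟨u, hwu.symm, ?_⟩
    have hu : G.dist r u ≤ q.length := G.dist_comm ▸ G.dist_le q
    have hw : q.length + 1 = G.dist r w := by rw [G.dist_comm, ← hp, Walk.length_cons]
    have hstep := hwu.symm.diff_dist_adj (u := r)
    lia

lemma eq_of_adj_of_dist_add_one_eq (hG : G.IsTree) (hx : G.Adj x w) (hy : G.Adj y w)
    (hxw : G.dist r x + 1 = G.dist r w) (hyw : G.dist r y + 1 = G.dist r w) : x = y := by
  obtain ⟨p, hp⟩ := hG.1.exists_walk_length_eq_dist r x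
  obtain ⟨q, hq⟩ := hG.1.exists_walk_length_eq_dist r y
  have hpx : (p.concat hx).IsPath := Walk.isPath_of_length_eq_dist _ (by simp [hp, hxw])
  have hqy : (q.concat hy).IsPath := Walk.isPath_of_length_eq_dist _ (by simp [hq, hyw])
  simpa using congrArg Walk.penultimate ((hG.existsUnique_path r w).unique hpx hqy)

lemma connected_induce_of_forall_exists_adj_lt {S : Set V} {a : V} (f : V → ℕ) (ha : a ∈ S)
    (h : ∀ w ∈ S, w ≠ a → ∃ u ∈ S, G.Adj u w ∧ f u < f w) : (G.induce S).Connected := by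
  have reachable (n : ℕ) : ∀ w (hw : w ∈ S), f w = n →
      (G.induce S).Reachable ⟨a, ha⟩ ⟨w, hw⟩ := by
    induction n using Nat.strong_induction_on with
    | h n ih =>
      rintro w hw rfl
      obtain rfl | hne := eq_or_ne w a
      · exact Reachable.refl _
      · obtain ⟨u, hu, huw, hlt⟩ := h w hw hne
        exact (ih _ hlt u hu rfl).trans (Adj.reachable (induce_adj.2 huw))
  exact connected_iff_exists_forall_reachable _ |>.2 ⟨⟨a, ha⟩, fun w ↦ reachable _ w.1 w.2 rfl⟩

/-- The vertices below `v` when the connected graph `G` is rooted at `r`, that is, those reached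
from `r` by a geodesic through `v`; the vertex `v` is a descendant of itself. -/
def descendants (G : SimpleGraph V) (r v : V) : Set V :=
  {w | G.dist r w = G.dist r v + G.dist v w}

/-- The neighbours of `v` one step further from the root `r`. -/
def children (G : SimpleGraph V) (r v : V) : Set V :=
  {c | G.Adj v c ∧ G.dist r c = G.dist r v + 1}

lemma mem_descendants : w ∈ descendants G r v ↔ G.dist r w = G.dist r v + G.dist v w :=
  Iff.rfl

lemma self_mem_descendants : v ∈ descendants G r v := by
  simp [mem_descendants]

lemma descendants_root : descendants G r r = Set.univ := by
  ext w
  simp [mem_descendants]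

lemma root_notMem_descendants (hG : G.Connected) (hv : v ≠ r) : r ∉ descendants G r v := by
  have hpos := hG.pos_dist_of_ne hv
  rw [mem_descendants, dist_self]
  lia

lemma mem_descendants_of_adj (hG : G.Connected) (hx : x ∈ descendants G r v) (hxy : G.Adj x y)
    (hdist : G.dist r y = G.dist r x + 1) : y ∈ descendants G r v := by
  have hadj := dist_eq_one_iff_adj.2 hxy
  have hvy := hG.dist_triangle (u := v) (v := x) (w := y)
  have hry := hG.dist_triangle (u := r) (v := v) (w := y)
  rw [mem_descendants] at *
  lia

lemma exists_parent_mem_descendants (hG : G.Connected) (hw : w ∈ descendants G r v)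
    (hne : w ≠ v) : ∃ u ∈ descendants G r v, G.Adj u w ∧ G.dist r u + 1 = G.dist r w := by
  obtain ⟨u, huw, hdist⟩ := exists_adj_dist_add_one_eq (hG.preconnected v w) hne
  have hadj := dist_eq_one_iff_adj.2 huw
  have hrw := hG.dist_triangle (u := r) (v := u) (w := w)
  have hru := hG.dist_triangle (u := r) (v := v) (w := u)
  simp only [mem_descendants] at *
  exact ⟨u, by lia, huw, by lia⟩

lemma exists_mem_children_mem_descendants (hG : G.Connected) (hw : w ∈ descendants G r v)
    (hne : w ≠ v) : ∃ c ∈ children G r v, w ∈ descendants G r c := by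
  obtain ⟨c, hcv, hdist⟩ := exists_adj_dist_add_one_eq (hG.preconnected w v) hne.symm
  have hadj := dist_eq_one_iff_adj.2 hcv.symm
  have hrw := hG.dist_triangle (u := r) (v := c) (w := w)
  have hrc := hG.dist_triangle (u := r) (v := v) (w := c)
  rw [G.dist_comm (u := w), G.dist_comm (u := w)] at hdist
  rw [mem_descendants] at hw
  exact ⟨c, ⟨hcv.symm, by lia⟩, mem_descendants.2 (by lia)⟩

lemma descendants_ssubset_of_mem_children (hG : G.Connected) (hc : c ∈ children G r v) :
    descendants G r c ⊂ descendants G r v := by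
  obtain ⟨hvc, hdist⟩ := hc
  have hadj := dist_eq_one_iff_adj.2 hvc
  refine (Set.ssubset_iff_of_subset fun w hw ↦ ?_).2 ⟨v, self_mem_descendants, ?_⟩
  · have hvw := hG.dist_triangle (u := v) (v := c) (w := w)
    have hrw := hG.dist_triangle (u := r) (v := v) (w := w)
    rw [mem_descendants] at *
    lia
  · rw [mem_descendants]
    lia

lemma connected_induce_descendants (hG : G.Connected) (r v : V) :
    (G.induce (descendants G r v)).Connected := by
  refine connected_induce_of_forall_exists_adj_lt (G.dist r) self_mem_descendants
    fun w hw hne ↦ ?_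
  obtain ⟨u, hu, huw, hdist⟩ := exists_parent_mem_descendants hG hw hne
  exact ⟨u, hu, huw, by lia⟩

lemma connected_induce_compl_descendants (hG : G.Connected) (hv : v ≠ r) :
    (G.induce (descendants G r v)ᶜ).Connected := by
  refine connected_induce_of_forall_exists_adj_lt (G.dist r) (root_notMem_descendants hG hv)
    fun w hw hne ↦ ?_
  obtain ⟨u, huw, hdist⟩ := exists_adj_dist_add_one_eq (hG.preconnected r w) hne
  exact ⟨u, fun hu ↦ hw (mem_descendants_of_adj hG hu huw hdist.symm), huw, by lia⟩

lemma mem_descendants_of_mem_children_of_adj (hG : G.IsTree) (hc : c ∈ children G r v)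
    (hx : x ∈ descendants G r c) (hxy : G.Adj x y) (hy : y ≠ v) : y ∈ descendants G r c := by
  rcases hG.dist_eq_dist_add_one_of_adj r hxy with hup | hdown
  · obtain rfl | hne := eq_or_ne x c
    · exact absurd (eq_of_adj_of_dist_add_one_eq hG hxy.symm hc.1 hup.symm hc.2.symm) hy
    · obtain ⟨u, hu, hux, hdist⟩ := exists_parent_mem_descendants hG.1 hx hne
      rwa [← eq_of_adj_of_dist_add_one_eq hG hux hxy.symm hdist hup.symm]
  · exact mem_descendants_of_adj hG.1 hx hxy hdown

lemma exists_mem_children_verts_subset_descendants (hG : G.IsTree) {H : G.Subgraph}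
    (hH : H.Connected) (hsub : H.verts ⊆ descendants G r v) (hv : v ∉ H.verts) :
    ∃ c ∈ children G r v, H.verts ⊆ descendants G r c := by
  have hne (x : H.verts) : x.1 ≠ v := fun h ↦ hv (h ▸ x.2)
  obtain ⟨x, hx⟩ := hH.nonempty
  obtain ⟨c, hc, hxc⟩ := exists_mem_children_mem_descendants hG.1 (hsub hx) (hne ⟨x, hx⟩)
  refine ⟨c, hc, fun y hy ↦ ?_⟩
  obtain ⟨p⟩ := hH.coe.preconnected ⟨y, hy⟩ ⟨x, hx⟩
  suffices ∀ {a b : H.verts}, H.coe.Walk a b → b.1 ∈ descendants G r c →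
      a.1 ∈ descendants G r c from this p hxc
  intro a b p hb
  induction p with
  | nil => exact hb
  | @cons a _ _ hadj _ ih =>
    exact mem_descendants_of_mem_children_of_adj hG hc (ih hb) (H.adj_sub hadj).symm (hne a)

lemma mem_verts_of_forall_ncard_descendants_le [Finite V] (hG : G.IsTree)
    (hchild : ∀ c ∈ children G r v, (descendants G r c).ncard ≤ k) {H : G.Subgraph}
    (hH : H.Connected) (hsub : H.verts ⊆ descendants G r v) (hcard : k < H.verts.ncard) :
    v ∈ H.verts := by
  by_contra hv
  obtain ⟨c, hc, hHc⟩ := exists_mem_children_verts_subset_descendants hG hH hsub hv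
  exact absurd (hcard.trans_le ((Set.ncard_le_ncard hHc).trans (hchild c hc))) (lt_irrefl k)

lemma exists_lt_ncard_descendants_forall_children_le [Finite V] (hG : G.Connected) (r : V)
    (hcard : k < Nat.card V) : ∃ v, k < (descendants G r v).ncard ∧
      ∀ c ∈ children G r v, (descendants G r c).ncard ≤ k := by
  have hr : k < (descendants G r r).ncard := by rwa [descendants_root, Set.ncard_univ]
  obtain ⟨v, hv, hmin⟩ := Set.exists_min_image {v | k < (descendants G r v).ncard}
    (fun v ↦ (descendants G r v).ncard) (Set.toFinite _) ⟨r, hr⟩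
  refine ⟨v, hv, fun c hc ↦ ?_⟩
  by_contra! hlt
  exact (Set.ncard_lt_ncard (descendants_ssubset_of_mem_children hG hc)).not_ge (hmin c hlt)

lemma ncard_descendants_le [Finite V] (hG : G.Connected)
    (hchild : ∀ c ∈ children G r v, (descendants G r c).ncard ≤ k) :
    (descendants G r v).ncard ≤ (children G r v).ncard * k + 1 := by
  have hfin := Set.toFinite (children G r v)
  have hcover : descendants G r v ⊆
      insert v (⋃ c ∈ hfin.toFinset, descendants G r c) := by
    intro w hw
    obtain rfl | hne := eq_or_ne w v
    · exact Set.mem_insert w _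
    · obtain ⟨c, hc, hwc⟩ := exists_mem_children_mem_descendants hG hw hne
      exact Set.mem_insert_of_mem v (Set.mem_biUnion (hfin.mem_toFinset.2 hc) hwc)
  calc
    (descendants G r v).ncard
      ≤ (⋃ c ∈ hfin.toFinset, descendants G r c).ncard + 1 :=
        (Set.ncard_le_ncard hcover).trans (Set.ncard_insert_le _ _)
    _ ≤ ∑ c ∈ hfin.toFinset, (descendants G r c).ncard + 1 := by
        gcongr
        exact Finset.set_ncard_biUnion_le _ _
    _ ≤ (children G r v).ncard * k + 1 := by
        gcongr
        rw [Set.ncard_eq_toFinset_card _ hfin]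
        exact Finset.sum_le_card_nsmul _ _ _ fun c hc ↦ hchild c (hfin.mem_toFinset.1 hc)

lemma children_subset_neighborSet : children G r v ⊆ G.neighborSet v :=
  fun _ hc ↦ hc.1

lemma ncard_children_le_degree [Fintype (G.neighborSet v)] :
    (children G r v).ncard ≤ G.degree v := by
  rw [← card_neighborSet_eq_degree, ← Nat.card_eq_fintype_card, Nat.card_coe_set_eq]
  exact Set.ncard_le_ncard children_subset_neighborSet (Set.toFinite _)

lemma ncard_children_lt_degree [Fintype (G.neighborSet v)] (hr : G.Reachable r v) (hv : v ≠ r) :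
    (children G r v).ncard < G.degree v := by
  obtain ⟨u, huv, hdist⟩ := exists_adj_dist_add_one_eq hr hv
  have hssub : children G r v ⊂ G.neighborSet v :=
    (Set.ssubset_iff_of_subset children_subset_neighborSet).2
      ⟨u, huv.symm, fun hu ↦ by have := hu.2; lia⟩
  rw [← card_neighborSet_eq_degree, ← Nat.card_eq_fintype_card, Nat.card_coe_set_eq]
  exact Set.ncard_lt_ncard hssub (Set.toFinite _)

lemma exists_degree_le_one [Fintype V] [DecidableRel G.Adj] (hG : G.IsTree) :
    ∃ r, G.degree r ≤ 1 := by
  obtain ⟨r⟩ := hG.1.nonempty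
  cases subsingleton_or_nontrivial V with
  | inl _ => exact ⟨r, by simp⟩
  | inr _ => exact hG.exists_vert_degree_one_of_nontrivial.imp fun _ ↦ le_of_eq

lemma exists_ncard_eq_connected_induce [Finite V] (hG : G.Connected) (hk : k < Nat.card V) :
    ∃ S : Set V, S.ncard = k + 1 ∧ (G.induce S).Connected := by
  induction k with
  | zero =>
    obtain ⟨a⟩ := hG.nonempty
    exact ⟨{a}, by simp, Connected.of_subsingleton⟩
  | succ k ih =>
    obtain ⟨S, hS, hconn⟩ := ih (by lia)
    obtain ⟨a, ha⟩ : S.Nonempty := Set.nonempty_of_ncard_ne_zero (by lia)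
    obtain ⟨b, hb⟩ : ∃ b, b ∉ S := by
      by_contra! hall
      rw [Set.eq_univ_of_forall hall, Set.ncard_univ] at hS
      lia
    obtain ⟨p⟩ := hG.preconnected a b
    obtain ⟨d, -, hfst, hsnd⟩ := p.exists_boundary_dart S ha hb
    refine ⟨insert d.snd S, by rw [Set.ncard_insert_of_notMem hsnd, hS], ?_⟩
    have hsingleton : (G.induce {d.snd}).Preconnected := Preconnected.of_subsingleton
    exact connected_induce_union hsingleton hconn.preconnected rfl hfst d.adj.symm

lemma isTree_coe_induce_top (hG : G.IsAcyclic) {S : Set V} (hS : (G.induce S).Connected) :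
    ((⊤ : G.Subgraph).induce S).coe.IsTree :=
  ⟨(connected_induce_iff.1 hS).coe, hG.subgraph _⟩

lemma isKEdgeTree_iff_ncard_verts [Finite V] {H : G.Subgraph} :
    H.IsKEdgeTree k ↔ H.coe.IsTree ∧ H.verts.ncard = k + 1 := by
  refine and_congr_right fun hH ↦ ?_
  have hcard := (isTree_iff_connected_and_card.1 hH).2
  have hedges : H.edgeSet.ncard = Nat.card H.coe.edgeSet := by
    rw [← H.image_coe_edgeSet_coe, Set.ncard_image_of_injective _
      (Sym2.map.injective Subtype.val_injective), Nat.card_coe_set_eq]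
  rw [hedges, ← Nat.card_coe_set_eq H.verts]
  lia

lemma exists_isKEdgeTree [Finite V] (hG : G.IsTree) (hk : k < Nat.card V) :
    ∃ H : G.Subgraph, H.IsKEdgeTree k := by
  obtain ⟨S, hS, hconn⟩ := exists_ncard_eq_connected_induce hG.1 hk
  exact ⟨_, isKEdgeTree_iff_ncard_verts.2 ⟨isTree_coe_induce_top hG.2 hconn, hS⟩⟩

lemma tauK_eq_one_of_pairwise_not_disjoint (hex : ∃ H : G.Subgraph, H.IsKEdgeTree k)
    (hmeet : ∀ H H' : G.Subgraph, H.IsKEdgeTree k → H'.IsKEdgeTree k →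
      ¬ Disjoint H.verts H'.verts) : G.tauK k = 1 := by
  obtain ⟨H, hH⟩ := hex
  refine IsGreatest.csSup_eq ⟨⟨{H}, by simpa using hH, by simp, by simp⟩, ?_⟩
  rintro n ⟨P, htree, hdisj, rfl⟩
  refine Finset.card_le_one.2 fun A hA B hB ↦ ?_
  by_contra hne
  exact hmeet A B (htree A hA) (htree B hB) (hdisj hA hB hne)

lemma tauK_induce_descendants_eq_one [Finite V] (hG : G.IsTree)
    (hv : k < (descendants G r v).ncard)
    (hchild : ∀ c ∈ children G r v, (descendants G r c).ncard ≤ k) :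
    ((⊤ : G.Subgraph).induce (descendants G r v)).coe.tauK k = 1 := by
  have htree := isTree_coe_induce_top hG.2 (connected_induce_descendants hG.1 r v)
  have hmem (H : ((⊤ : G.Subgraph).induce (descendants G r v)).coe.Subgraph)
      (hH : H.IsKEdgeTree k) : ⟨v, self_mem_descendants⟩ ∈ H.verts := by
    have hcard : (Subgraph.coeSubgraph H).verts.ncard = k + 1 := by
      rw [Subgraph.verts_coeSubgraph, Set.ncard_image_of_injective _ Subtype.val_injective,
        (isKEdgeTree_iff_ncard_verts.1 hH).2]
    have hvH := mem_verts_of_forall_ncard_descendants_le hG hchild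
      (Subgraph.Connected.coeSubgraph H ⟨hH.1.1⟩) (Subgraph.coeSubgraph_le H).1 (by lia)
    simpa [self_mem_descendants] using hvH
  exact tauK_eq_one_of_pairwise_not_disjoint (exists_isKEdgeTree htree hv)
    fun H H' hH hH' ↦ Set.not_disjoint_iff.2 ⟨_, hmem H hH, hmem H' hH'⟩

end

theorem stmt_11_general {V : Type*} [Fintype V] (s k : ℕ) (hs : 2 ≤ s)
    (T : SimpleGraph V) [DecidableRel T.Adj] (hT : T.IsTree)
    (hdeg : ∀ v : V, T.degree v ≤ s) (hcard : k + 1 ≤ Fintype.card V) :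
    ∃ B : T.Subgraph, B.coe.IsTree ∧
      (B = ⊤ ∨ (T.induce B.vertsᶜ).IsTree) ∧
      B.verts.ncard ≤ (s - 1) * k + 1 ∧
      B.coe.tauK k = 1 := by
  obtain ⟨r, hr⟩ := exists_degree_le_one hT
  obtain ⟨v, hv, hchild⟩ := exists_lt_ncard_descendants_forall_children_le hT.1 r
    (Nat.card_eq_fintype_card (α := V) ▸ hcard)
  refine ⟨(⊤ : T.Subgraph).induce (descendants T r v),
    isTree_coe_induce_top hT.2 (connected_induce_descendants hT.1 r v), ?_, ?_,
    tauK_induce_descendants_eq_one hT hv hchild⟩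
  · obtain rfl | hne := eq_or_ne v r
    · exact .inl (descendants_root (G := T) ▸ SimpleGraph.Subgraph.induce_self_verts)
    · exact .inr ⟨connected_induce_compl_descendants hT.1 hne, hT.2.induce _⟩
  · have hchildren : (children T r v).ncard ≤ s - 1 := by
      obtain rfl | hne := eq_or_ne v r
      · have hroot : (children T v v).ncard ≤ T.degree v := ncard_children_le_degree
        lia
      · have hlt := (ncard_children_lt_degree (hT.1.preconnected r v) hne).trans_le (hdeg v)
        lia
    grw [SimpleGraph.Subgraph.induce_verts, ncard_descendants_le hT.1 hchild, hchildren]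

/-- Let `s ≥ 3` and `k ≥ 1` and let `T` be a finite tree with maximum degree at
most `s` and with `v(T) ≥ k + 1`.  Then `T` has a branch `B` (a subtree such that
either `B = T` or `T − B` is again a tree) with `v(B) ≤ (s−1)k + 1` and
`τ_k(B) = 1`. -/
theorem stmt_11 {V : Type} [Fintype V] (s k : ℕ) (hs : 3 ≤ s) (hk : 1 ≤ k)
    (T : SimpleGraph V) [DecidableRel T.Adj] (hT : T.IsTree)
    (hdeg : ∀ v : V, T.degree v ≤ s) (hcard : k + 1 ≤ Fintype.card V) :
    ∃ B : T.Subgraph, B.coe.IsTree ∧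
      (B = ⊤ ∨ (T.induce B.vertsᶜ).IsTree) ∧
      B.verts.ncard ≤ (s - 1) * k + 1 ∧
      B.coe.tauK k = 1 :=
  stmt_11_general s k (by lia) T hT hdeg hcard
end
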